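/- arXiv:2003.05690 — 2 statements merged into one kernel-verified Lean document; each statement's English description precedes it below -/
import Mathlib

section
/- Let E ⊆ ℝⁿ be an open set and let p(·) ∈ P(E). If f ∈ L^{p(·)}(E) and g ∈ L^{p'(·)}(E), then fg is integrable on E and ∫_E |f(x) g(x)| dx ≤ r_p ‖f‖_{L^{p(·)}(E)} ‖g‖_{L^{p'(·)}(E)}, where r_p = 1 + 1/p⁻ − 1/p⁺. -/
/-!
For *any* `η`, `ζ` admissible in the definitions of the two Luxemburg norms, Young's inequality
applied pointwise to `|f| / η` and `|g| / ζ`, together with `1 / p ≤ 1 / p⁻` and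
`1 / p' = 1 - 1 / p ≤ 1 - 1 / p⁺`, gives
`|f g| ≤ η ζ ((1 / p⁻) (|f| / η) ^ p + (1 - 1 / p⁺) (|g| / ζ) ^ p')` almost everywhere. Both modulars
are at most `1`, so integrating yields `∫ |f g| ≤ r_p η ζ`. Taking the infimum over `η` and `ζ`
separately gives the claim; in this order it does not matter whether the infima are attained or
vanish.
-/

open MeasureTheory Metric Set Filter ENNReal

noncomputable section

abbrev Vn (n : ℕ) := EuclideanSpace ℝ (Fin n)

/-- The Luxemburg norm `‖f‖_{L^{p(·)}(E)}` with variable exponent `p` on the set `E`. -/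
def luxNorm {n : ℕ} (E : Set (Vn n)) (p f : Vn n → ℝ) : ℝ :=
  sInf {η : ℝ | 0 < η ∧ ∫⁻ x in E, ENNReal.ofReal ((|f x| / η) ^ (p x)) ∂volume ≤ 1}

/-- Membership in the variable Lebesgue space `L^{p(·)}(E)`. -/
def MemLux {n : ℕ} (E : Set (Vn n)) (p f : Vn n → ℝ) : Prop :=
  Measurable f ∧ ∃ η : ℝ, 0 < η ∧
    ∫⁻ x in E, ENNReal.ofReal ((|f x| / η) ^ (p x)) ∂volume ≤ 1

/-- The class `𝒫(E)`: measurable exponents with values in `[1,∞)`,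
`ess inf p > 1` and `ess sup p < ∞`. -/
def IsPExp {n : ℕ} (E : Set (Vn n)) (p : Vn n → ℝ) : Prop :=
  Measurable p ∧ (∀ x ∈ E, 1 ≤ p x) ∧
    1 < essInf p (volume.restrict E) ∧
    IsBoundedUnder (· ≤ ·) (ae (volume.restrict E)) p

/-- The pointwise conjugate exponent `p'(x) = p(x)/(p(x)-1)`. -/
def conjExp {n : ℕ} (p : Vn n → ℝ) : Vn n → ℝ := fun x => p x / (p x - 1)

/-- The Hardy–Littlewood maximal operator relative to the set `E`. -/
def maxOp {n : ℕ} (E : Set (Vn n)) (f : Vn n → ℝ) (x : Vn n) : ℝ :=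
  ⨆ B : {B : Set (Vn n) // (∃ c r, 0 < r ∧ B = Metric.ball c r) ∧ x ∈ B},
    (volume B.1).toReal⁻¹ * ∫ y in B.1 ∩ E, |f y|

/-- The class `ℬ(ℝⁿ)`: exponents in `𝒫(ℝⁿ)` for which `M` is bounded on `L^{p(·)}(ℝⁿ)`. -/
def IsBExp {n : ℕ} (p : Vn n → ℝ) : Prop :=
  IsPExp Set.univ p ∧ ∃ C : ℝ, 0 < C ∧ ∀ f : Vn n → ℝ, MemLux Set.univ p f →
    luxNorm Set.univ p (maxOp Set.univ f) ≤ C * luxNorm Set.univ p f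

/-- The characteristic function of a set. -/
def chiS {n : ℕ} (S : Set (Vn n)) : Vn n → ℝ := S.indicator fun _ => 1

/-- The property of `δ₂` from Lemma 2.3 (for the conjugate exponent `q'`):
`‖χ_S‖_{q'} / ‖χ_B‖_{q'} ≤ C (|S|/|B|)^{δ₂}` for all balls `B` and measurable `S ⊆ B`. -/
def Delta2Prop {n : ℕ} (q : Vn n → ℝ) (δ₂ : ℝ) : Prop :=
  ∃ C : ℝ, 0 < C ∧ ∀ (c : Vn n) (r : ℝ), 0 < r → ∀ S ⊆ Metric.ball c r, MeasurableSet S →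
    luxNorm Set.univ (conjExp q) (chiS S) ≤
      C * ((volume S).toReal / (volume (Metric.ball c r)).toReal) ^ δ₂ *
        luxNorm Set.univ (conjExp q) (chiS (Metric.ball c r))

/-- `B_k = {x : |x| ≤ 2^k}`. -/
def Bk (n : ℕ) (k : ℤ) : Set (Vn n) := Metric.closedBall 0 ((2 : ℝ) ^ k)

/-- `A_k = B_k \ B_{k-1}`. -/
def Ak (n : ℕ) (k : ℤ) : Set (Vn n) := Bk n k \ Bk n (k - 1)

/-- The homogeneous Herz norm `‖f‖_{K̇^{α,p}_{q(·)}}`, valued in `ℝ≥0∞`. -/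
def herzNorm {n : ℕ} (α p : ℝ) (q f : Vn n → ℝ) : ℝ≥0∞ :=
  (∑' k : ℤ, (ENNReal.ofReal ((2 : ℝ) ^ ((k : ℝ) * α)) *
      ENNReal.ofReal (luxNorm Set.univ q fun x => f x * chiS (Ak n k) x)) ^ p) ^ (1 / p)

/-- The homogeneous weak Herz norm `‖f‖_{WK̇^{α,p}_{q(·)}}`, valued in `ℝ≥0∞`. -/
def weakHerzNorm {n : ℕ} (α p : ℝ) (q f : Vn n → ℝ) : ℝ≥0∞ :=
  ⨆ lam : {l : ℝ // 0 < l},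
    ENNReal.ofReal lam.1 *
      (∑' k : ℤ, (ENNReal.ofReal ((2 : ℝ) ^ ((k : ℝ) * α)) *
          ENNReal.ofReal (luxNorm Set.univ q (chiS {x ∈ Ak n k | lam.1 < |f x|}))) ^ p) ^ (1 / p)

/-- The weak variable Lebesgue norm `‖f‖_{WL^{q(·)}}`. -/
def weakLuxNorm {n : ℕ} (q f : Vn n → ℝ) : ℝ :=
  ⨆ lam : {l : ℝ // 0 < l}, lam.1 * luxNorm Set.univ q (chiS {x | lam.1 < |f x|})

/-- `χ̃_k` : for `k ≥ 1` the indicator of `A_k`, for `k = 0` the indicator of `B_0`. -/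
def chiTilde (n : ℕ) (k : ℕ) : Vn n → ℝ :=
  if k = 0 then chiS (Bk n 0) else chiS (Ak n (k : ℤ))

/-- The non-homogeneous Herz norm `‖f‖_{K^{α,p}_{q(·)}}`. -/
def herzNormNH {n : ℕ} (α p : ℝ) (q f : Vn n → ℝ) : ℝ≥0∞ :=
  (∑' k : ℕ, (ENNReal.ofReal ((2 : ℝ) ^ ((k : ℝ) * α)) *
      ENNReal.ofReal (luxNorm Set.univ q fun x => f x * chiTilde n k x)) ^ p) ^ (1 / p)

/-- The non-homogeneous weak Herz norm `‖f‖_{WK^{α,p}_{q(·)}}`. -/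
def weakHerzNormNH {n : ℕ} (α p : ℝ) (q f : Vn n → ℝ) : ℝ≥0∞ :=
  ⨆ lam : {l : ℝ // 0 < l},
    ENNReal.ofReal lam.1 *
      ((ENNReal.ofReal (luxNorm Set.univ q (chiS {x ∈ Bk n 0 | lam.1 < |f x|}))) ^ p +
        ∑' k : {k : ℕ // 1 ≤ k}, (ENNReal.ofReal ((2 : ℝ) ^ ((k.1 : ℝ) * α)) *
          ENNReal.ofReal (luxNorm Set.univ q (chiS {x ∈ Ak n (k.1 : ℤ) | lam.1 < |f x|}))) ^ p) ^
        (1 / p)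

/-- A dyadic central `(α, q(·))`-atom supported in `B_k`, with moments up to order `s`
vanishing. -/
def IsCentralAtom {n : ℕ} (q : Vn n → ℝ) (α : ℝ) (s : ℕ) (k : ℤ) (a : Vn n → ℝ) : Prop :=
  Measurable a ∧ (∀ x, x ∉ Bk n k → a x = 0) ∧
    luxNorm Set.univ q a ≤ (volume (Bk n k)).toReal ^ (-(α / (n : ℝ))) ∧
    ∀ β : Fin n → ℕ, (∑ i, β i) ≤ s → ∫ x, a x * ∏ i, x i ^ β i = 0

/-- Partial derivative in the `i`-th coordinate direction. -/
def pDeriv {n : ℕ} (i : Fin n) (f : Vn n → ℝ) : Vn n → ℝ :=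
  fun x => fderiv ℝ f x (EuclideanSpace.single i (1 : ℝ))

/-- Iterated partial derivative `D^β` for a multi-index `β`. -/
def mDeriv {n : ℕ} (β : Fin n → ℕ) (f : Vn n → ℝ) : Vn n → ℝ :=
  (List.finRange n).foldr (fun i g => (pDeriv i)^[β i] g) f

/-- The class `𝒜_N` of Schwartz functions `φ` with
`sup_{|a|,|b| ≤ N} |x^a D^b φ(x)| ≤ 1`. -/
def InClassA {n : ℕ} (N : ℕ) (φ : Vn n → ℝ) : Prop :=
  (∃ ψ : SchwartzMap (Vn n) ℝ, ⇑ψ = φ) ∧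
    ∀ a b : Fin n → ℕ, (∑ i, a i) ≤ N → (∑ i, b i) ≤ N →
      ∀ x : Vn n, |(∏ i, x i ^ a i) * mDeriv b φ x| ≤ 1

/-- The grand maximal function `G_N(g)(x) = sup_{φ ∈ 𝒜_N} sup_{|y-x|<t} |(g ∗ φ_t)(y)|`. -/
def grandMax {n : ℕ} (N : ℕ) (g : Vn n → ℝ) (x : Vn n) : ℝ :=
  ⨆ φ : {φ : Vn n → ℝ // InClassA N φ},
    ⨆ yt : {yt : Vn n × ℝ // 0 < yt.2 ∧ dist x yt.1 < yt.2},
      |∫ z, g z * ((yt.1.2 ^ n)⁻¹ * φ.1 ((yt.1.2)⁻¹ • (yt.1.1 - z)))|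

/-- Young's inequality with a variable exponent `p ∈ [a, b]`, the coefficients `1 / p` and `1 / p'`
being replaced by their upper bounds `1 / a` and `1 - 1 / b`. -/
lemma young_bounds {a b p u v : ℝ} (ha : 1 < a) (hap : a ≤ p) (hpb : p ≤ b)
    (hu : 0 ≤ u) (hv : 0 ≤ v) :
    u * v ≤ 1 / a * u ^ p + (1 - 1 / b) * v ^ (p / (p - 1)) := by
  have hp : 1 < p := ha.trans_le hap
  have hc : p.HolderConjugate (p / (p - 1)) := Real.HolderConjugate.conjExponent hp
  have hy := Real.young_inequality_of_nonneg hu hv hc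
  have h1 : 1 / p ≤ 1 / a := one_div_le_one_div_of_le (by linarith) hap
  have h2 : 1 / b ≤ 1 / p := one_div_le_one_div_of_le (by linarith) hpb
  have h3 : 1 / (p / (p - 1)) = 1 - 1 / p := by
    have : p ≠ 0 := by linarith
    field_simp
  have hup : 0 ≤ u ^ p := Real.rpow_nonneg hu _
  have hvp : 0 ≤ v ^ (p / (p - 1)) := Real.rpow_nonneg hv _
  calc u * v ≤ u ^ p / p + v ^ (p / (p - 1)) / (p / (p - 1)) := hy
    _ = 1 / p * u ^ p + 1 / (p / (p - 1)) * v ^ (p / (p - 1)) := by ring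
    _ ≤ _ := by
      rw [h3]
      gcongr

lemma le_mul_sInf_mul_sInf {A B : Set ℝ} (hA : A.Nonempty) (hB : B.Nonempty)
    (hA0 : ∀ η ∈ A, 0 < η) (hB0 : ∀ ζ ∈ B, 0 < ζ) {I r : ℝ} (hr : 0 < r)
    (h : ∀ η ∈ A, ∀ ζ ∈ B, I ≤ r * (η * ζ)) : I ≤ r * (sInf A * sInf B) := by
  have h1 : ∀ ζ ∈ B, I ≤ r * (sInf A * ζ) := by
    intro ζ hζ
    have hrζ : 0 < r * ζ := mul_pos hr (hB0 ζ hζ)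
    have : I / (r * ζ) ≤ sInf A := le_csInf hA fun η hη => by
      rw [div_le_iff₀ hrζ]
      linarith [h η hη ζ hζ]
    rw [div_le_iff₀ hrζ] at this
    linarith
  have hs : 0 ≤ sInf A := Real.sInf_nonneg fun η hη => (hA0 η hη).le
  rcases hs.eq_or_lt with h0 | h0
  · obtain ⟨ζ, hζ⟩ := hB
    have := h1 ζ hζ
    rw [← h0] at this ⊢
    simpa using this
  · have hrA : 0 < r * sInf A := mul_pos hr h0
    have : I / (r * sInf A) ≤ sInf B := le_csInf hB fun ζ hζ => by
      rw [div_le_iff₀ hrA]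
      linarith [h1 ζ hζ]
    rw [div_le_iff₀ hrA] at this
    linarith

/-- An exponent in `𝒫(E)` lies almost everywhere between its essential bounds. The
real-valued `essInf` and `essSup` need boundedness for this: below from `1 ≤ p` on `E`, above by
hypothesis. -/
lemma IsPExp.ae_bounds {n : ℕ} {E : Set (Vn n)} (hE : MeasurableSet E) {p : Vn n → ℝ}
    (hp : IsPExp E p) :
    ∀ᵐ x ∂(volume.restrict E), essInf p (volume.restrict E) ≤ p x ∧
      p x ≤ essSup p (volume.restrict E) := by
  obtain ⟨-, h1, -, hb⟩ := hp
  have hbelow : IsBoundedUnder (· ≥ ·) (ae (volume.restrict E)) p :=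
    ⟨1, by
      rw [eventually_map]
      filter_upwards [ae_restrict_mem hE] with x hx using h1 x hx⟩
  filter_upwards [ae_essInf_le hbelow, ae_le_essSup hb] with x hx hy using ⟨hx, hy⟩

/-- Hölder's inequality before passing to the infimum: any admissible `η` and `ζ` may stand in place
of the two Luxemburg norms. -/
lemma lintegral_mul_le_of_modular {n : ℕ} {E : Set (Vn n)} {p f g : Vn n → ℝ}
    (hpm : Measurable p) (hf : Measurable f) {a b : ℝ} (ha : 1 < a) (hb : 1 < b)
    (hab : ∀ᵐ x ∂(volume.restrict E), a ≤ p x ∧ p x ≤ b) {η ζ : ℝ} (hη : 0 < η) (hζ : 0 < ζ)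
    (hfη : ∫⁻ x in E, ENNReal.ofReal ((|f x| / η) ^ (p x)) ≤ 1)
    (hgζ : ∫⁻ x in E, ENNReal.ofReal ((|g x| / ζ) ^ (conjExp p x)) ≤ 1) :
    ∫⁻ x in E, ENNReal.ofReal |f x * g x| ≤
      ENNReal.ofReal ((1 + 1 / a - 1 / b) * (η * ζ)) := by
  have hb' : 0 ≤ 1 - 1 / b := by
    rw [sub_nonneg, div_le_one (by linarith)]
    exact hb.le
  have ha' : 0 ≤ 1 / a := by positivity
  have hpt : ∀ᵐ x ∂(volume.restrict E), ENNReal.ofReal |f x * g x| ≤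
      ENNReal.ofReal (η * ζ) *
        (ENNReal.ofReal (1 / a) * ENNReal.ofReal ((|f x| / η) ^ (p x)) +
          ENNReal.ofReal (1 - 1 / b) * ENNReal.ofReal ((|g x| / ζ) ^ (conjExp p x))) := by
    filter_upwards [hab] with x hx
    have hy := young_bounds ha hx.1 hx.2 (u := |f x| / η) (v := |g x| / ζ)
      (by positivity) (by positivity)
    have h1 : 0 ≤ (|f x| / η) ^ (p x) := by positivity
    have h2 : 0 ≤ (|g x| / ζ) ^ (conjExp p x) := by positivity
    rw [← ENNReal.ofReal_mul ha', ← ENNReal.ofReal_mul hb',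
      ← ENNReal.ofReal_add (mul_nonneg ha' h1) (mul_nonneg hb' h2),
      ← ENNReal.ofReal_mul (by positivity)]
    refine ENNReal.ofReal_le_ofReal ?_
    calc |f x * g x| = η * ζ * (|f x| / η * (|g x| / ζ)) := by
          rw [abs_mul]
          field_simp
      _ ≤ _ := mul_le_mul_of_nonneg_left hy (by positivity)
  have hm : Measurable fun x => ENNReal.ofReal ((|f x| / η) ^ (p x)) :=
    ENNReal.measurable_ofReal.comp (((hf.abs).div_const η).pow hpm)
  calc ∫⁻ x in E, ENNReal.ofReal |f x * g x|
      ≤ ∫⁻ x in E, ENNReal.ofReal (η * ζ) *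
        (ENNReal.ofReal (1 / a) * ENNReal.ofReal ((|f x| / η) ^ (p x)) +
          ENNReal.ofReal (1 - 1 / b) * ENNReal.ofReal ((|g x| / ζ) ^ (conjExp p x))) :=
        lintegral_mono_ae hpt
    _ = ENNReal.ofReal (η * ζ) *
        (ENNReal.ofReal (1 / a) * (∫⁻ x in E, ENNReal.ofReal ((|f x| / η) ^ (p x))) +
          ENNReal.ofReal (1 - 1 / b) *
            ∫⁻ x in E, ENNReal.ofReal ((|g x| / ζ) ^ (conjExp p x))) := by
        rw [lintegral_const_mul' _ _ ENNReal.ofReal_ne_top,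
          lintegral_add_left (hm.const_mul _),
          lintegral_const_mul' _ _ ENNReal.ofReal_ne_top,
          lintegral_const_mul' _ _ ENNReal.ofReal_ne_top]
    _ ≤ ENNReal.ofReal (η * ζ) *
        (ENNReal.ofReal (1 / a) * 1 + ENNReal.ofReal (1 - 1 / b) * 1) := by
        gcongr
    _ = ENNReal.ofReal ((1 + 1 / a - 1 / b) * (η * ζ)) := by
        rw [mul_one, mul_one, ← ENNReal.ofReal_add ha' hb', ← ENNReal.ofReal_mul (by positivity)]
        congr 1
        ring

/-- Lemma 2.2 (generalized Hölder inequality):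
`∫_E |fg| ≤ r_p ‖f‖_{L^{p(·)}(E)} ‖g‖_{L^{p'(·)}(E)}` with `r_p = 1 + 1/p⁻ - 1/p⁺`. -/
theorem statement1 {n : ℕ} (E : Set (Vn n)) (hE : IsOpen E)
    (p : Vn n → ℝ) (hp : IsPExp E p)
    (f g : Vn n → ℝ) (hf : MemLux E p f) (hg : MemLux E (conjExp p) g) :
    IntegrableOn (fun x => f x * g x) E volume ∧
      ∫ x in E, |f x * g x| ≤
        (1 + 1 / essInf p (volume.restrict E) - 1 / essSup p (volume.restrict E)) *
          (luxNorm E p f * luxNorm E (conjExp p) g) := by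
  have hbd := hp.ae_bounds hE.measurableSet
  obtain ⟨hpm, -, ha, -⟩ := hp
  obtain ⟨hfm, hA⟩ := hf
  obtain ⟨hgm, hB⟩ := hg
  set a := essInf p (volume.restrict E)
  set b := essSup p (volume.restrict E)
  have hne : NeBot (ae (volume.restrict E)) := by
    rw [ae_neBot]
    intro h0
    -- For the zero measure the real-valued `essInf` is `sSup univ = 0`.
    have : a = 0 := by simp [a, h0, essInf, liminf, limsInf]
    linarith
  obtain ⟨x, hx⟩ := hbd.exists
  have hb : 1 < b := ha.trans_le (hx.1.trans hx.2)
  have hr : 0 < 1 + 1 / a - 1 / b := by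
    have h1 : 1 / b < 1 := by
      rw [div_lt_one (by linarith)]
      exact hb
    have h2 : 0 < 1 / a := by positivity
    linarith
  have key : ∀ {η ζ : ℝ}, 0 < η → 0 < ζ →
      ∫⁻ x in E, ENNReal.ofReal ((|f x| / η) ^ (p x)) ≤ 1 →
      ∫⁻ x in E, ENNReal.ofReal ((|g x| / ζ) ^ (conjExp p x)) ≤ 1 →
      ∫⁻ x in E, ENNReal.ofReal |f x * g x| ≤
        ENNReal.ofReal ((1 + 1 / a - 1 / b) * (η * ζ)) :=
    fun hη hζ => lintegral_mul_le_of_modular hpm hfm ha hb hbd hη hζ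
  refine ⟨⟨(hfm.mul hgm).aestronglyMeasurable, ?_⟩, ?_⟩
  · obtain ⟨η, hη, hfη⟩ := hA
    obtain ⟨ζ, hζ, hgζ⟩ := hB
    rw [hasFiniteIntegral_iff_norm]
    exact (key hη hζ hfη hgζ).trans_lt ENNReal.ofReal_lt_top
  · refine le_mul_sInf_mul_sInf hA hB (fun η h => h.1) (fun ζ h => h.1) hr ?_
    rintro η ⟨hη, hfη⟩ ζ ⟨hζ, hgζ⟩
    have hm : Measurable fun x => |f x * g x| := (hfm.mul hgm).abs
    rw [integral_eq_lintegral_of_nonneg_ae (ae_of_all _ fun x => abs_nonneg _)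
      hm.aestronglyMeasurable]
    exact ENNReal.toReal_le_of_le_ofReal (by positivity) (key hη hζ hfη hgζ)

end
end

section
/- Let p(·) ∈ B(ℝⁿ). Then there exist a constant C > 0 and an exponent δ₂ ∈ (0,1) such that for all balls B in ℝⁿ and all measurable subsets S ⊂ B: ‖χ_S‖_{L^{p'(·)}(ℝⁿ)} / ‖χ_B‖_{L^{p'(·)}(ℝⁿ)} ≤ C (|S|/|B|)^{δ₂}, where p'(x) = p(x)/(p(x)−1). -/
/-!
The proof is by duality and a stopping-time construction; it uses only one application of the
maximal operator `M` at a time, on bounded functions with bounded support.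

*From pointwise averages to norms* (`transfer`). If `∫_A h ≤ l ∫_E M h` for every bounded `h ≥ 0`,
then `‖χ_A‖_{p'} ≤ 3 C₁ l ‖χ_E‖_{p'}`. For `t = 3 C₁ l η` with `η` admissible for `χ_E`, suppose
that the modular `ρ` of `χ_A / t` exceeds `1`; then `h = χ_A t^{1-p'} ρ^{-1/p}` has `p`-modular `1`
and `∫_A h ≥ t`, while Young's inequality and the boundedness of `M` give
`∫_E M h < 2 C₁ η`, a contradiction.

*Logarithmic gain* (`dyadic_step`, `dyadic_chain`). Let `D` be a doubling constant of the dyadic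
cells inside a cube `Q`, let `a = 1 / (2 D)` and let `S ⊆ Q` be a union of cells with
`|S| ≤ a ^ k |Q|`. Starting from `S`, repeatedly pass to the union of the maximal cells in which the
current set has density `> a`. This gives an increasing chain `S = S₀ ⊆ S₁ ⊆ ⋯ ⊆ S_k` with
`a |S_{i+1}| ≤ |S_i|`, and in each stopping cell the new part `S_{i+1} \ S_i` has at least half of
the mass. Hence `∫_S h ≤ 2 ∫_{S_{i+1} \ S_i} g` whenever `g` dominates the dyadic averages of `h`,
and as these differences are disjoint, `k ∫_S h ≤ 2 ∫_{S_k} g`. With `g = D · M h` and `transfer`,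
`‖χ_S‖ ≤ (const / k) ‖χ_{S_k}‖`.

*Power gain* (`luxNorm_half`, `luxNorm_decay`). Fix `k` so large that the factor is at most `1 / 2`
and put `α = a ^ k`. Then `|S| ≤ α |Q|` yields `S' ⊇ S` with `α |S'| ≤ |S|` and
`‖χ_S‖ ≤ ‖χ_{S'}‖ / 2`, so by iteration `|S| ≤ α ^ m |Q|` implies `‖χ_S‖ ≤ 2 ^ {-m} ‖χ_Q‖`, which is
a power law with exponent `log 2 / log (1 / α)`. Finally `‖χ_Q‖` is comparable to `‖χ_B‖` for the
cube `Q` circumscribed about the ball `B` (`luxNorm_unitCell_le`), and an arbitrary measurable `S`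
is first enlarged to an open set of at most twice its measure.

In `IsBExp` the number `luxNorm (maxOp f)` is `0` by convention when `maxOp f ∉ L^{p(·)}`. This does
no harm for bounded `f` with bounded support: there `maxOp f = O((1 + |x|)^{-n})`, which lies in
`L^{p(·)}` because `ess inf p > 1` (`maxOp_memLux`).
-/

open MeasureTheory Metric Set Filter ENNReal

noncomputable section

/-! ### Stopping cells in a nested family of partitions -/

/-- One stopping-time step for the nested partitions into fibres of `q m`, below the top fibre
`Q = {q 0 = z₀}`. The set `S'` is the union of the maximal fibres in which `S` has density larger
than `a`. By the doubling condition `hD` and `a * D ≤ 1/2`, `S` fills at most half of each such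
fibre, so integrals of `h` over `S` are controlled by those over `S' \ S` of any majorant `g` of the
averages of `h`. -/
theorem dyadic_step {X ι : Type*} [MeasurableSpace X] [Countable ι] (μ : Measure X)
    (q : ℕ → X → ι) (hmeas : ∀ m z, MeasurableSet {x | q m x = z})
    (hnest : ∀ m x y, q (m + 1) x = q (m + 1) y → q m x = q m y)
    (hfin : ∀ m x, μ {y | q m y = q m x} ≠ ∞) (hpos : ∀ m x, μ {y | q m y = q m x} ≠ 0)
    (a D : ℝ≥0∞) (ha1 : a < 1) (haD : a * D ≤ 2⁻¹)
    (hD : ∀ m x, μ {y | q m y = q m x} ≤ D * μ {y | q (m + 1) y = q (m + 1) x})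
    (z₀ : ι) (S : Set X) (hS : MeasurableSet S) (hSQ : S ⊆ {x | q 0 x = z₀})
    (hSo : ∀ x ∈ S, ∃ m, {y | q m y = q m x} ⊆ S)
    (hSa : μ S ≤ a * μ {x | q 0 x = z₀}) :
    ∃ S' : Set X, MeasurableSet S' ∧ S ⊆ S' ∧ S' ⊆ {x | q 0 x = z₀} ∧
      (∀ x ∈ S', ∃ m, {y | q m y = q m x} ⊆ S') ∧ a * μ S' ≤ μ S ∧
      ∀ h g : X → ℝ≥0∞, (∀ m x, ∫⁻ y in {y | q m y = q m x}, h y ∂μ ≤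
          μ {y | q m y = q m x} * g x) →
        ∫⁻ x in S, h x ∂μ ≤ 2 * ∫⁻ x in S' \ S, g x ∂μ := by
  classical
  have hnest' : ∀ m j, j ≤ m → ∀ x y, q m x = q m y → q j x = q j y := by
    intro m j hj
    induction m, hj using Nat.le_induction with
    | base => exact fun x y h => h
    | succ m hj ih => exact fun x y h => ih x y (hnest m x y h)
  let isDense : ℕ → X → Prop := fun m x => a * μ {y | q m y = q m x} < μ (S ∩ {y | q m y = q m x})
  have dense_congr : ∀ m x y, q m x = q m y → (isDense m x ↔ isDense m y) := by
    intro m x y h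
    simp only [isDense, h]
  -- `P (m, z)` is the fibre `{q m = z}` if that fibre is a stopping fibre in `Q`, and `∅` otherwise
  let P : ℕ × ι → Set X := fun k =>
    {x | q 0 x = z₀ ∧ q k.1 x = k.2 ∧ isDense k.1 x ∧ ∀ j < k.1, ¬ isDense j x}
  have hP : ∀ k x, x ∈ P k → P k = {y | q k.1 y = q k.1 x} := by
    rintro k x ⟨h0, hz, hs, hj⟩
    ext y
    constructor
    · rintro ⟨-, h, -⟩
      exact h.trans hz.symm
    · intro h
      have h : q k.1 y = q k.1 x := h
      refine ⟨(hnest' _ 0 (Nat.zero_le _) _ _ h).trans h0, h.trans hz,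
        (dense_congr _ _ _ h).2 hs, fun j hjk => ?_⟩
      rw [dense_congr j y x (hnest' _ _ hjk.le _ _ h)]
      exact hj j hjk
  have hPm : ∀ k, MeasurableSet (P k) := by
    intro k
    rcases (P k).eq_empty_or_nonempty with h | ⟨x, hx⟩
    · rw [h]; exact MeasurableSet.empty
    · rw [hP k x hx]; exact hmeas _ _
  have hPd : Pairwise (Function.onFun Disjoint P) := by
    intro k l hkl
    refine Set.disjoint_left.2 ?_
    rintro x ⟨-, hk, hks, hkj⟩ ⟨-, hl, hls, hlj⟩
    have : k.1 = l.1 := by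
      rcases lt_trichotomy k.1 l.1 with h | h | h
      · exact absurd hks (hlj _ h)
      · exact h
      · exact absurd hls (hkj _ h)
    exact hkl (Prod.ext this (by rw [← hk, ← hl, this]))
  have hSP : S ⊆ ⋃ k, P k := by
    intro x hx
    obtain ⟨m, hm⟩ := hSo x hx
    have hex : ∃ m, isDense m x := by
      refine ⟨m, ?_⟩
      simp only [isDense]
      rw [inter_eq_self_of_subset_right hm]
      calc a * μ {y | q m y = q m x} < 1 * μ {y | q m y = q m x} :=
            ENNReal.mul_lt_mul_left (hpos m x) (hfin m x) ha1
        _ = _ := one_mul _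
    refine mem_iUnion.2 ⟨(Nat.find hex, q (Nat.find hex) x), hSQ hx, rfl, Nat.find_spec hex,
      fun j hj => Nat.find_min hex hj⟩
  have hhalf : ∀ k, μ (P k) ≤ 2 * μ (P k \ S) := by
    intro k
    rcases (P k).eq_empty_or_nonempty with h | ⟨x, hx⟩
    · simp [h]
    have hPx := hP k x hx
    obtain ⟨h0, hz, hs, hj⟩ := hx
    have h1 : μ (P k ∩ S) ≤ 2⁻¹ * μ (P k) := by
      -- the top fibre is not dense, and the parent of a stopping fibre has density at most `a`
      rcases hk : k.1 with _ | j
      · exfalso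
        rw [hk] at hs
        simp only [isDense, h0] at hs
        exact absurd (hs.trans_le (measure_mono inter_subset_left)) (not_lt.2 hSa)
      · have hns := hj j (by omega)
        simp only [isDense, not_lt] at hns
        rw [hPx, hk]
        calc μ ({y | q (j + 1) y = q (j + 1) x} ∩ S) ≤ μ (S ∩ {y | q j y = q j x}) :=
              measure_mono fun y hy => ⟨hy.2, hnest _ _ _ hy.1⟩
          _ ≤ a * μ {y | q j y = q j x} := hns
          _ ≤ a * (D * μ {y | q (j + 1) y = q (j + 1) x}) := by gcongr; exact hD _ _
          _ = a * D * μ {y | q (j + 1) y = q (j + 1) x} := by rw [mul_assoc]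
          _ ≤ _ := by gcongr
    have hPfin : μ (P k) ≠ ∞ := by rw [hPx]; exact hfin _ _
    have h2 : 2 * μ (P k) ≤ μ (P k) + 2 * μ (P k \ S) := by
      calc 2 * μ (P k) = 2 * (μ (P k ∩ S) + μ (P k \ S)) := by rw [measure_inter_add_sdiff _ hS]
        _ ≤ 2 * (2⁻¹ * μ (P k) + μ (P k \ S)) := by gcongr
        _ = _ := by
          rw [mul_add, ← mul_assoc, ENNReal.mul_inv_cancel two_ne_zero ofNat_ne_top, one_mul]
    rw [two_mul] at h2
    exact (ENNReal.add_le_add_iff_left hPfin).1 h2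
  refine ⟨⋃ k, P k, MeasurableSet.iUnion hPm, hSP, iUnion_subset fun k x hx => hx.1, ?_, ?_, ?_⟩
  · intro x hx
    obtain ⟨k, hk⟩ := mem_iUnion.1 hx
    exact ⟨k.1, (hP k x hk) ▸ subset_iUnion P k⟩
  · rw [measure_iUnion hPd hPm, ← ENNReal.tsum_mul_left]
    calc ∑' k, a * μ (P k) ≤ ∑' k, μ (S ∩ P k) := by
          refine ENNReal.tsum_le_tsum fun k => ?_
          rcases (P k).eq_empty_or_nonempty with h | ⟨x, hx⟩
          · simp [h]
          rw [hP k x hx]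
          exact hx.2.2.1.le
      _ = μ (⋃ k, S ∩ P k) := by
          rw [measure_iUnion (fun i j hij => (hPd hij).mono inter_subset_right inter_subset_right)
            (fun k => hS.inter (hPm k))]
      _ ≤ μ S := measure_mono (iUnion_subset fun k => inter_subset_left)
  · intro h g hg
    calc ∫⁻ x in S, h x ∂μ ≤ ∫⁻ x in ⋃ k, P k, h x ∂μ := lintegral_mono_set hSP
      _ = ∑' k, ∫⁻ x in P k, h x ∂μ := lintegral_iUnion hPm hPd _
      _ ≤ ∑' k, 2 * ∫⁻ x in P k \ S, g x ∂μ := by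
          refine ENNReal.tsum_le_tsum fun k => ?_
          rcases (P k).eq_empty_or_nonempty with he | ⟨x, hx⟩
          · simp [he]
          have hPx := hP k x hx
          have hPfin : μ (P k) ≠ ∞ := by rw [hPx]; exact hfin _ _
          have hPpos : μ (P k) ≠ 0 := by rw [hPx]; exact hpos _ _
          set A := ∫⁻ x in P k, h x ∂μ with hA
          calc A = μ (P k) * (A / μ (P k)) := (ENNReal.mul_div_cancel hPpos hPfin).symm
            _ ≤ 2 * μ (P k \ S) * (A / μ (P k)) := by gcongr; exact hhalf k
            _ = 2 * ∫⁻ x in P k \ S, (A / μ (P k)) ∂μ := by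
              rw [setLIntegral_const, mul_assoc, mul_comm (A / _)]
            _ ≤ _ := by
              gcongr 2 * ?_
              refine setLIntegral_mono' ((hPm k).diff hS) fun y hy => ?_
              refine ENNReal.div_le_of_le_mul' ?_
              rw [hA, hP k y hy.1]
              exact hg _ _
      _ = 2 * ∑' k, ∫⁻ x in P k \ S, g x ∂μ := ENNReal.tsum_mul_left
      _ = 2 * ∫⁻ x in (⋃ k, P k) \ S, g x ∂μ := by
          rw [iUnion_sdiff, lintegral_iUnion (fun k => (hPm k).diff hS)
            (fun i j hij => (hPd hij).mono sdiff_subset sdiff_subset)]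

/-- `k` stopping-time steps. The successive differences are disjoint, and the majorant `g` has
integral at least `(∫_S h) / 2` over each, hence the factor `k` on the left of the last estimate. -/
theorem dyadic_chain {X ι : Type*} [MeasurableSpace X] [Countable ι] (μ : Measure X)
    (q : ℕ → X → ι) (hmeas : ∀ m z, MeasurableSet {x | q m x = z})
    (hnest : ∀ m x y, q (m + 1) x = q (m + 1) y → q m x = q m y)
    (hfin : ∀ m x, μ {y | q m y = q m x} ≠ ∞) (hpos : ∀ m x, μ {y | q m y = q m x} ≠ 0)
    (a D : ℝ≥0∞) (ha0 : a ≠ 0) (ha1 : a < 1) (haD : a * D ≤ 2⁻¹)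
    (hD : ∀ m x, μ {y | q m y = q m x} ≤ D * μ {y | q (m + 1) y = q (m + 1) x})
    (z₀ : ι) (k : ℕ) (S : Set X) (hS : MeasurableSet S) (hSQ : S ⊆ {x | q 0 x = z₀})
    (hSo : ∀ x ∈ S, ∃ m, {y | q m y = q m x} ⊆ S)
    (hSa : μ S ≤ a ^ k * μ {x | q 0 x = z₀}) :
    ∃ S' : Set X, MeasurableSet S' ∧ S ⊆ S' ∧ S' ⊆ {x | q 0 x = z₀} ∧
      (∀ x ∈ S', ∃ m, {y | q m y = q m x} ⊆ S') ∧ a ^ k * μ S' ≤ μ S ∧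
      ∀ h g : X → ℝ≥0∞, (∀ m x, ∫⁻ y in {y | q m y = q m x}, h y ∂μ ≤
          μ {y | q m y = q m x} * g x) →
        k * ∫⁻ x in S, h x ∂μ ≤ 2 * ∫⁻ x in S' \ S, g x ∂μ := by
  induction k with
  | zero => exact ⟨S, hS, subset_rfl, hSQ, hSo, by simp, by simp⟩
  | succ k ih =>
    obtain ⟨T, hT, hST, hTQ, hTo, hTa, hTh⟩ := ih (hSa.trans (by
      gcongr ?_ * _
      exact pow_le_pow_right_of_le_one' ha1.le (Nat.le_succ k)))
    have hk0 : a ^ k ≠ 0 := pow_ne_zero _ ha0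
    have hkt : a ^ k ≠ ∞ := ENNReal.pow_ne_top (ha1.trans one_lt_top).ne
    have hTa' : μ T ≤ a * μ {x | q 0 x = z₀} := by
      refine (ENNReal.mul_le_mul_iff_right hk0 hkt).1 ?_
      calc a ^ k * μ T ≤ μ S := hTa
        _ ≤ _ := hSa
        _ = _ := by rw [pow_succ, mul_assoc]
    obtain ⟨S', hS', hTS', hSQ', hSo', hSa', hSh'⟩ := dyadic_step μ q hmeas hnest hfin hpos a D
      ha1 haD hD z₀ T hT hTQ hTo hTa'
    refine ⟨S', hS', hST.trans hTS', hSQ', hSo', ?_, fun h g hg => ?_⟩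
    · calc a ^ (k + 1) * μ S' = a ^ k * (a * μ S') := by rw [pow_succ, mul_assoc]
        _ ≤ a ^ k * μ T := by gcongr
        _ ≤ μ S := hTa
    · have hdis : Disjoint (T \ S) (S' \ T) := by
        rw [Set.disjoint_left]; exact fun x hx hx' => hx'.2 hx.1
      calc ((k + 1 : ℕ) : ℝ≥0∞) * ∫⁻ x in S, h x ∂μ
          = k * ∫⁻ x in S, h x ∂μ + ∫⁻ x in S, h x ∂μ := by push_cast; rw [add_mul, one_mul]
        _ ≤ 2 * ∫⁻ x in T \ S, g x ∂μ + 2 * ∫⁻ x in S' \ T, g x ∂μ :=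
            add_le_add (hTh h g hg) ((lintegral_mono_set hST).trans (hSh' h g hg))
        _ = 2 * ∫⁻ x in (T \ S) ∪ (S' \ T), g x ∂μ := by
            rw [lintegral_union (hS'.diff hT) hdis, mul_add]
        _ ≤ _ := by
            gcongr 2 * ?_
            refine lintegral_mono_set (union_subset (sdiff_subset_sdiff_left hTS')
              (sdiff_subset_sdiff_right hST))

/-! ### Dyadic cells adapted to a ball -/

/-- The integer coordinates of the generation-`m` dyadic cell containing `x`, for the half-open grid
of side `2 * r / 2 ^ m` with a vertex at `c - (r, …, r)`. With this normalisation the cube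
`{x | gridIdx c r 0 x = 0}` is circumscribed about `ball c r`. -/
def gridIdx {n : ℕ} (c : Vn n) (r : ℝ) (m : ℕ) (x : Vn n) : Fin n → ℤ :=
  fun i => ⌊(2 : ℝ) ^ m * ((x i - c i + r) / (2 * r))⌋

/-- The generation-`m` dyadic cell containing `x`, a half-open cube of side `2 * r / 2 ^ m`. -/
def cell {n : ℕ} (c : Vn n) (r : ℝ) (m : ℕ) (x : Vn n) : Set (Vn n) :=
  {y | gridIdx c r m y = gridIdx c r m x}

theorem gridIdx_measurable {n : ℕ} (c : Vn n) (r : ℝ) (m : ℕ) (z : Fin n → ℤ) :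
    MeasurableSet {x | gridIdx c r m x = z} := by
  have : Measurable (gridIdx c r m) := by
    refine measurable_pi_lambda _ fun i => Int.measurable_floor.comp ?_
    have : Measurable fun x : Vn n => x i := by fun_prop
    fun_prop
  exact this (measurableSet_singleton z)

/-- Each cell of generation `m + 1` lies in a single cell of generation `m`. -/
theorem gridIdx_nest {n : ℕ} (c : Vn n) (r : ℝ) (m : ℕ) (x y : Vn n)
    (h : gridIdx c r (m + 1) x = gridIdx c r (m + 1) y) : gridIdx c r m x = gridIdx c r m y := by
  have key : ∀ t : ℝ, ⌊t⌋ = ⌊2 * t⌋ / 2 := by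
    intro t
    have h1 := Int.floor_le t
    have h2 := Int.lt_floor_add_one t
    have h3 : 2 * ⌊t⌋ ≤ ⌊2 * t⌋ := Int.le_floor.2 (by push_cast; linarith)
    have h4 : ⌊2 * t⌋ < 2 * ⌊t⌋ + 2 := Int.floor_lt.2 (by push_cast; linarith)
    omega
  funext i
  have := congrFun h i
  simp only [gridIdx, pow_succ'] at this ⊢
  rw [key, ← mul_assoc, this, key ((2 : ℝ) ^ m * _), ← mul_assoc]

theorem mem_cell_iff {n : ℕ} (c : Vn n) {r : ℝ} (hr : 0 < r) (m : ℕ) (x y : Vn n) :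
    y ∈ cell c r m x ↔ ∀ i, (gridIdx c r m x i : ℝ) * (2 * r / 2 ^ m : ℝ) ≤ y i - c i + r ∧
      y i - c i + r < ((gridIdx c r m x i : ℝ) + 1) * (2 * r / 2 ^ m : ℝ) := by
  have hs : 0 < 2 * r / 2 ^ m := by positivity
  have e : ∀ t : ℝ, (2 : ℝ) ^ m * (t / (2 * r)) = t / (2 * r / 2 ^ m) := by
    intro t; field_simp
  simp only [cell, mem_ofPred_eq, funext_iff]
  refine forall_congr' fun i => ?_
  rw [← le_div_iff₀ hs, ← div_lt_iff₀ hs, ← e, ← Int.floor_eq_iff]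
  rfl

theorem exists_cell_balls {n : ℕ} (c : Vn n) {r : ℝ} (hr : 0 < r) (m : ℕ) (x : Vn n) :
    ∃ z : Vn n, ball z (r / 2 ^ m) ⊆ cell c r m x ∧
      cell c r m x ⊆ ball z (2 * (n + 1) * (r / 2 ^ m)) := by
  set s := r / 2 ^ m with hs
  have hs0 : 0 < s := by positivity
  have e : 2 * r / 2 ^ m = 2 * s := by rw [hs]; ring
  refine ⟨WithLp.toLp 2 fun i => c i - r + (2 * gridIdx c r m x i + 1) * s, ?_, ?_⟩
  · intro y hy
    rw [mem_cell_iff c hr]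
    simp only [e]
    intro i
    have h1 := PiLp.norm_apply_le (y - WithLp.toLp 2 fun i => c i - r +
      (2 * gridIdx c r m x i + 1) * s) i
    have h2 := h1.trans_lt (mem_ball_iff_norm.1 hy)
    simp only [PiLp.sub_apply, Real.norm_eq_abs, abs_lt] at h2
    constructor <;> linarith
  · intro y hy
    rw [mem_cell_iff c hr] at hy
    simp only [e] at hy
    rw [mem_ball_iff_norm, EuclideanSpace.norm_eq, Real.sqrt_lt' (by positivity)]
    calc _ ≤ ∑ i : Fin n, s ^ 2 := by
          refine Finset.sum_le_sum fun i _ => ?_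
          rw [Real.norm_eq_abs, sq_abs]
          refine sq_le_sq' ?_ ?_ <;> simp only [PiLp.sub_apply] <;> linarith [(hy i).1, (hy i).2]
      _ = n * s ^ 2 := by simp
      _ < _ := by
          have : (0 : ℝ) ≤ n := n.cast_nonneg
          have := pow_pos hs0 2
          nlinarith [mul_nonneg (n.cast_nonneg : (0 : ℝ) ≤ n) this.le, mul_nonneg (sq_nonneg (n : ℝ)) this.le]

/-- A doubling constant: it bounds the ratio of the volumes of a ball and a cell (or of two balls)
whose radii differ by a factor at most `4 * (n + 1)`. The factor `2` makes it at least `2`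
in every dimension. -/
def dbl (n : ℕ) : ℝ := 2 * (4 * (n + 1)) ^ n

theorem two_le_dbl (n : ℕ) : 2 ≤ dbl n := by
  have : (1 : ℝ) ≤ (4 * (n + 1)) ^ n := one_le_pow₀ (by linarith [(n.cast_nonneg : (0 : ℝ) ≤ n)])
  unfold dbl; linarith

theorem volume_ball_le {n : ℕ} (x y : Vn n) {s t : ℝ} (hst : s ≤ 4 * (n + 1) * t) :
    volume (ball x s) ≤ ENNReal.ofReal (dbl n) * volume (ball y t) := by
  have h4 : (0 : ℝ) < 4 * (n + 1) := by positivity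
  calc volume (ball x s) ≤ volume (ball x (4 * (n + 1) * t)) := measure_mono (ball_subset_ball hst)
    _ = ENNReal.ofReal ((4 * (n + 1)) ^ n) * volume (ball y t) := by
      rw [Measure.addHaar_ball_mul_of_pos _ _ h4, finrank_euclideanSpace_fin,
        Measure.addHaar_ball_center volume y]
    _ ≤ _ := by
      gcongr
      unfold dbl
      have : (0 : ℝ) ≤ (4 * (n + 1)) ^ n := by positivity
      linarith

theorem volume_cell_ne_top {n : ℕ} (c : Vn n) {r : ℝ} (hr : 0 < r) (m : ℕ) (x : Vn n) :
    volume (cell c r m x) ≠ ∞ := by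
  obtain ⟨z, -, h⟩ := exists_cell_balls c hr m x
  exact ((measure_mono h).trans_lt measure_ball_lt_top).ne

theorem volume_cell_ne_zero {n : ℕ} (c : Vn n) {r : ℝ} (hr : 0 < r) (m : ℕ) (x : Vn n) :
    volume (cell c r m x) ≠ 0 := by
  obtain ⟨z, h, -⟩ := exists_cell_balls c hr m x
  exact ((measure_ball_pos _ z (by positivity)).trans_le (measure_mono h)).ne'

theorem volume_cell_le {n : ℕ} (c : Vn n) {r : ℝ} (hr : 0 < r) (m : ℕ) (x : Vn n) :
    volume (cell c r m x) ≤ ENNReal.ofReal (dbl n) * volume (cell c r (m + 1) x) := by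
  obtain ⟨z, -, h⟩ := exists_cell_balls c hr m x
  obtain ⟨w, h', -⟩ := exists_cell_balls c hr (m + 1) x
  refine (measure_mono h).trans ((volume_ball_le z w ?_).trans
    (mul_le_mul_right (measure_mono h') _))
  rw [pow_succ]
  apply le_of_eq
  field_simp
  norm_num

theorem ball_subset_cell {n : ℕ} (c : Vn n) {r : ℝ} (hr : 0 < r) :
    ball c r ⊆ {x | gridIdx c r 0 x = 0} := by
  intro y hy
  funext i
  have h2 := (PiLp.norm_apply_le (y - c) i).trans_lt (mem_ball_iff_norm.1 hy)
  simp only [PiLp.sub_apply, Real.norm_eq_abs, abs_lt] at h2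
  simp only [gridIdx, pow_zero, one_mul, Pi.zero_apply]
  rw [Int.floor_eq_zero_iff]
  constructor
  · apply div_nonneg <;> linarith
  · rw [div_lt_one (by linarith)]; linarith

theorem exists_cell_subset {n : ℕ} (c : Vn n) {r : ℝ} (hr : 0 < r) {U : Set (Vn n)}
    (hU : IsOpen U) {x : Vn n} (hx : x ∈ U) : ∃ m, cell c r m x ⊆ U := by
  obtain ⟨ε, hε, hεU⟩ := Metric.isOpen_iff.1 hU x hx
  have ht : Tendsto (fun m : ℕ => 2 * (2 * ((n : ℝ) + 1) * (r / 2 ^ m))) atTop (nhds 0) := by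
    have := (tendsto_pow_atTop_nhds_zero_of_lt_one (r := (1 / 2 : ℝ)) (by norm_num)
      (by norm_num)).const_mul (2 * (2 * ((n : ℝ) + 1) * r))
    rw [mul_zero] at this
    refine this.congr fun m => ?_
    rw [one_div, inv_pow]; ring
  obtain ⟨m, hm⟩ := (ht.eventually (gt_mem_nhds hε)).exists
  refine ⟨m, fun y hy => hεU ?_⟩
  obtain ⟨z, -, h⟩ := exists_cell_balls c hr m x
  have h1 := mem_ball.1 (h hy)
  have h2 := mem_ball.1 (h (show x ∈ cell c r m x from rfl))
  rw [mem_ball]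
  linarith [dist_triangle_right y x z]

/-! ### The maximal operator on bounded functions -/

/-- The supremum defining `maxOp univ h x` is a genuine one when `h` is bounded. -/
theorem maxOp_bddAbove {n : ℕ} (h : Vn n → ℝ) (hm : Measurable h) (b : ℝ) (hb : ∀ x, |h x| ≤ b)
    (x : Vn n) : BddAbove (range fun B : {B : Set (Vn n) // (∃ c r, 0 < r ∧ B = Metric.ball c r) ∧
      x ∈ B} => (volume B.1).toReal⁻¹ * ∫ y in B.1 ∩ univ, |h y|) := by
  refine ⟨b, ?_⟩
  rintro _ ⟨⟨B, ⟨c, r, hr, rfl⟩, hx⟩, rfl⟩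
  simp only [inter_univ]
  have hv : 0 < (volume (ball c r)).toReal :=
    ENNReal.toReal_pos (measure_ball_pos _ c hr).ne' measure_ball_lt_top.ne
  rw [inv_mul_le_iff₀ hv]
  have := setIntegral_mono_on (μ := volume) (s := ball c r) (f := fun y => |h y|) (g := fun _ => b)
    (Measure.integrableOn_of_bounded (M := b) measure_ball_lt_top.ne
      (by fun_prop) (by simpa using Eventually.of_forall hb)) (by simp [measure_ball_lt_top])
      measurableSet_ball (fun y _ => hb y)
  simpa [Measure.real] using this

theorem maxOp_nonneg {n : ℕ} (h : Vn n → ℝ) (x : Vn n) : 0 ≤ maxOp univ h x :=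
  Real.iSup_nonneg fun B => by positivity

/-- Averages over dyadic cells are dominated by `dbl n` times the maximal function. -/
theorem lintegral_cell_le {n : ℕ} (h : Vn n → ℝ) (hm : Measurable h) (h0 : ∀ x, 0 ≤ h x)
    (b : ℝ) (hb : ∀ x, h x ≤ b)
    (c : Vn n) {r : ℝ} (hr : 0 < r) (m : ℕ) (x : Vn n) :
    ∫⁻ y in cell c r m x, ENNReal.ofReal (h y) ≤
      volume (cell c r m x) * (ENNReal.ofReal (dbl n) * ENNReal.ofReal (maxOp univ h x)) := by
  obtain ⟨z, h1, h2⟩ := exists_cell_balls c hr m x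
  set B := ball z (2 * (n + 1) * (r / 2 ^ m)) with hB
  have hxB : x ∈ B := h2 (show x ∈ cell c r m x from rfl)
  have hrB : 0 < 2 * (n + 1) * (r / 2 ^ m) := by positivity
  have hint : IntegrableOn h B := Measure.integrableOn_of_bounded (M := b) measure_ball_lt_top.ne
      (by fun_prop) (by
        refine Eventually.of_forall fun y => ?_
        rw [Real.norm_eq_abs, abs_of_nonneg (h0 y)]; exact hb y)
  have hv : 0 < (volume B).toReal :=
    ENNReal.toReal_pos (measure_ball_pos _ z hrB).ne' measure_ball_lt_top.ne
  have hM : (volume B).toReal⁻¹ * ∫ y in B, h y ≤ maxOp univ h x := by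
    have := le_ciSup (maxOp_bddAbove h hm b (fun y => by rw [abs_of_nonneg (h0 y)]; exact hb y) x)
      ⟨B, ⟨z, _, hrB, hB⟩, hxB⟩
    simp only [inter_univ, abs_of_nonneg (h0 _)] at this
    simpa only [maxOp, inter_univ, abs_of_nonneg (h0 _)] using this
  rw [inv_mul_le_iff₀ hv] at hM
  calc ∫⁻ y in cell c r m x, ENNReal.ofReal (h y) ≤ ∫⁻ y in B, ENNReal.ofReal (h y) :=
        lintegral_mono_set h2
    _ = ENNReal.ofReal (∫ y in B, h y) :=
        (ofReal_integral_eq_lintegral_ofReal hint (Eventually.of_forall h0)).symm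
    _ ≤ ENNReal.ofReal ((volume B).toReal * maxOp univ h x) := ENNReal.ofReal_le_ofReal hM
    _ = volume B * ENNReal.ofReal (maxOp univ h x) := by
        rw [ENNReal.ofReal_mul hv.le, ENNReal.ofReal_toReal measure_ball_lt_top.ne]
    _ ≤ (ENNReal.ofReal (dbl n) * volume (cell c r m x)) * ENNReal.ofReal (maxOp univ h x) := by
        gcongr
        refine (volume_ball_le z z (t := r / 2 ^ m) ?_).trans
          (mul_le_mul_right (measure_mono h1) _)
        have : 0 < r / 2 ^ m := by positivity
        have := mul_pos (by positivity : (0 : ℝ) < n + 1) this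
        nlinarith
    _ = _ := by ring

/-- `M h` decays like `|x| ^ (-n)` for bounded `h` with bounded support: a ball containing `x` and
meeting the support has radius comparable at least to `|x|`, for `|x|` large. -/
theorem maxOp_decay {n : ℕ} (h : Vn n → ℝ) (hm : Measurable h) (h0 : ∀ x, 0 ≤ h x)
    (b : ℝ) (hb : ∀ x, h x ≤ b) (R : ℝ) (hR : ∀ x, x ∉ ball 0 R → h x = 0) :
    ∃ K : ℝ, 0 < K ∧ ∀ x, maxOp univ h x ≤ K * ((1 + ‖x‖) ^ n)⁻¹ := by
  wlog hRpos : 0 < R generalizing R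
  · exact this 1 (fun x _ => hR x fun hx => by
      rw [ball_eq_empty.2 (not_lt.1 hRpos)] at hx; exact hx) one_pos
  have hb0 : 0 ≤ b := (h0 0).trans (hb 0)
  have hint : ∀ B : Set (Vn n), volume B ≠ ∞ → IntegrableOn h B := fun B hB =>
    Measure.integrableOn_of_bounded (M := b) hB (by fun_prop) (by
      refine Eventually.of_forall fun y => ?_
      rw [Real.norm_eq_abs, abs_of_nonneg (h0 y)]; exact hb y)
  have hI : Integrable h := (integrableOn_iff_integrable_of_support_subset (s := ball 0 R)
    (fun x hx => by by_contra hx'; exact hx (hR x hx'))).1 (hint _ measure_ball_lt_top.ne)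
  set v := (volume (ball (0 : Vn n) 1)).toReal with hv
  have hv0 : 0 < v := ENNReal.toReal_pos (measure_ball_pos _ _ one_pos).ne' measure_ball_lt_top.ne
  set I := ∫ x, h x
  have hI0 : 0 ≤ I := integral_nonneg h0
  refine ⟨(b + I / v) * (3 + R) ^ n + 1, by positivity, fun x => ?_⟩
  have hx1 : 0 < 1 + ‖x‖ := by positivity
  refine Real.iSup_le ?_ (by positivity)
  rintro ⟨B, ⟨c, r, hr, rfl⟩, hx⟩
  simp only [inter_univ, abs_of_nonneg (h0 _)]
  have hvol : (volume (ball c r)).toReal = r ^ n * v := by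
    rw [Measure.addHaar_ball_of_pos _ _ hr, finrank_euclideanSpace_fin, ENNReal.toReal_mul,
      ENNReal.toReal_ofReal (by positivity)]
  have hIB : ∫ y in ball c r, h y ≤ I := setIntegral_le_integral hI (Eventually.of_forall h0)
  have hIb : ∫ y in ball c r, h y ≤ (r ^ n * v) * b := by
    have := setIntegral_mono_on (μ := volume) (s := ball c r) (f := h) (g := fun _ => b)
      (hint _ measure_ball_lt_top.ne) (by simp [measure_ball_lt_top]) measurableSet_ball
      (fun y _ => hb y)
    rw [← hvol]
    simpa [Measure.real] using this
  rw [hvol]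
  have hrv : 0 < r ^ n * v := by positivity
  have fin : ∀ {d : ℝ}, 0 < d → 1 + ‖x‖ ≤ (3 + R) * d → ((3 + R) ^ n) * ((1 + ‖x‖) ^ n)⁻¹ ≥ (d ^ n)⁻¹ := by
    intro d hd hle
    have h1 : (1 + ‖x‖) ^ n ≤ ((3 + R) * d) ^ n := pow_le_pow_left₀ hx1.le hle n
    rw [ge_iff_le, ← div_eq_mul_inv, inv_eq_one_div, div_le_div_iff₀ (by positivity) (by positivity),
      one_mul, ← mul_pow]
    exact h1
  have hpow : 0 ≤ ((1 + ‖x‖) ^ n)⁻¹ := by positivity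
  by_cases hne : (ball c r ∩ ball 0 R).Nonempty
  · obtain ⟨y, hy1, hy2⟩ := hne
    have hxR : ‖x‖ ≤ R + 2 * r := by
      have h1 := dist_triangle_right x y c
      have h2 := mem_ball.1 hx
      have h3 := mem_ball.1 hy1
      have h4 := mem_ball_zero_iff.1 hy2
      have h5 := norm_le_norm_add_norm_sub y x
      rw [← dist_eq_norm, dist_comm] at h5
      linarith
    -- large balls are controlled by the total integral of `h`, small ones by its supremum
    rcases le_total 1 r with h1r | hr1
    · have h1 := fin hr (by nlinarith)
      have : (r ^ n * v)⁻¹ * ∫ y in ball c r, h y ≤ I / v * (r ^ n)⁻¹ := by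
        calc (r ^ n * v)⁻¹ * ∫ y in ball c r, h y ≤ (r ^ n * v)⁻¹ * I := by gcongr
          _ = _ := by rw [mul_inv]; ring
      have h3 : I / v * (r ^ n)⁻¹ ≤ I / v * ((3 + R) ^ n * ((1 + ‖x‖) ^ n)⁻¹) :=
        mul_le_mul_of_nonneg_left h1 (by positivity)
      have h4 : 0 ≤ b * ((3 + R) ^ n * ((1 + ‖x‖) ^ n)⁻¹) := by positivity
      nlinarith
    · have h1 := fin one_pos (by linarith)
      rw [one_pow, inv_one] at h1
      have : (r ^ n * v)⁻¹ * ∫ y in ball c r, h y ≤ b := by rwa [inv_mul_le_iff₀ hrv]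
      have h3 : b * 1 ≤ b * ((3 + R) ^ n * ((1 + ‖x‖) ^ n)⁻¹) :=
        mul_le_mul_of_nonneg_left h1 (by positivity)
      have h4 : 0 ≤ I / v * ((3 + R) ^ n * ((1 + ‖x‖) ^ n)⁻¹) := by positivity
      nlinarith
  · have : ∫ y in ball c r, h y = 0 := setIntegral_eq_zero_of_forall_eq_zero fun y hy =>
      hR y fun hy' => hne ⟨y, hy, hy'⟩
    rw [this, mul_zero]
    positivity

theorem lintegral_decay {n : ℕ} {pm : ℝ} (hpm : 1 < pm) :
    ∫⁻ x : Vn n, ENNReal.ofReal ((((1 + ‖x‖) ^ n)⁻¹) ^ pm) ≠ ∞ := by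
  have e : ∀ x : Vn n, (((1 + ‖x‖) ^ n)⁻¹) ^ pm = (1 + ‖x‖) ^ (-((n : ℝ) * pm)) := by
    intro x
    have : 0 ≤ 1 + ‖x‖ := by positivity
    rw [Real.inv_rpow (by positivity), ← Real.rpow_natCast, ← Real.rpow_mul this, Real.rpow_neg this]
  simp only [e]
  rcases Nat.eq_zero_or_pos n with rfl | hn
  · simp only [CharP.cast_eq_zero, zero_mul, neg_zero, Real.rpow_zero, lintegral_const]
    have : (univ : Set (Vn 0)) = ball 0 1 := by
      ext x; simp [Subsingleton.elim x 0]
    rw [this]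
    exact ENNReal.mul_ne_top (by simp) measure_ball_lt_top.ne
  · have hn' : (0 : ℝ) < n := by exact_mod_cast hn
    have := integrable_one_add_norm (E := Vn n) (μ := volume) (r := n * pm) (by
      rw [finrank_euclideanSpace_fin]; nlinarith)
    exact ((hasFiniteIntegral_iff_ofReal (Eventually.of_forall fun x => by positivity)).1 this.2).ne

/-- Since `p ≥ pm > 1` almost everywhere, the decay of `M h` puts it in `L^{p(·)}`. -/
theorem maxOp_memLux {n : ℕ} (p : Vn n → ℝ) {pm : ℝ} (hpm : 1 < pm) (hpp : ∀ᵐ x, pm ≤ p x)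
    (h : Vn n → ℝ) (hm : Measurable h) (h0 : ∀ x, 0 ≤ h x)
    (b : ℝ) (hb : ∀ x, h x ≤ b) (R : ℝ) (hR : ∀ x, x ∉ ball 0 R → h x = 0) :
    ∃ η : ℝ, 0 < η ∧ ∫⁻ x, ENNReal.ofReal ((|maxOp univ h x| / η) ^ p x) ≤ 1 := by
  obtain ⟨K, hK, hKx⟩ := maxOp_decay h hm h0 b hb R hR
  set I := ∫⁻ x : Vn n, ENNReal.ofReal ((((1 + ‖x‖) ^ n)⁻¹) ^ pm) with hI
  have hIt : I ≠ ∞ := lintegral_decay hpm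
  set J := max 1 I.toReal with hJ
  have hJ1 : 1 ≤ J := le_max_left _ _
  have hJ0 : 0 < J := by linarith
  refine ⟨K * J, by positivity, ?_⟩
  calc ∫⁻ x, ENNReal.ofReal ((|maxOp univ h x| / (K * J)) ^ p x)
      ≤ ∫⁻ x, ENNReal.ofReal J⁻¹ * ENNReal.ofReal ((((1 + ‖x‖) ^ n)⁻¹) ^ pm) := by
        refine lintegral_mono_ae ?_
        filter_upwards [hpp] with x hx
        rw [← ENNReal.ofReal_mul (by positivity)]
        refine ENNReal.ofReal_le_ofReal ?_
        rw [abs_of_nonneg (maxOp_nonneg h x)]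
        set u := ((1 + ‖x‖) ^ n)⁻¹ with hu
        have hu0 : 0 ≤ u := by positivity
        have hu1 : u ≤ 1 := inv_le_one_of_one_le₀ (one_le_pow₀ (by linarith [norm_nonneg x]))
        have h1 : maxOp univ h x / (K * J) ≤ J⁻¹ * u := by
          rw [div_le_iff₀ (by positivity)]
          calc _ ≤ K * u := hKx x
            _ = _ := by field_simp
        have hMn := maxOp_nonneg h x
        have hJu : J⁻¹ * u ≤ 1 := mul_le_one₀ (inv_le_one_of_one_le₀ hJ1) hu0 hu1
        calc (maxOp univ h x / (K * J)) ^ p x ≤ (J⁻¹ * u) ^ p x :=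
              Real.rpow_le_rpow (by positivity) h1 (by linarith)
          _ ≤ (J⁻¹ * u) ^ pm :=
              Real.rpow_le_rpow_of_exponent_ge_of_imp (by positivity) hJu hx (by intros; linarith)
          _ = J⁻¹ ^ pm * u ^ pm := Real.mul_rpow (by positivity) hu0
          _ ≤ J⁻¹ * u ^ pm := by
              gcongr
              exact Real.rpow_le_self_of_le_one (by positivity) (inv_le_one_of_one_le₀ hJ1) hpm.le
    _ = ENNReal.ofReal J⁻¹ * I := lintegral_const_mul' _ _ ENNReal.ofReal_ne_top
    _ ≤ ENNReal.ofReal J⁻¹ * ENNReal.ofReal J := by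
        gcongr
        rw [← ENNReal.ofReal_toReal hIt]
        exact ENNReal.ofReal_le_ofReal (le_max_right _ _)
    _ = 1 := by
        rw [← ENNReal.ofReal_mul (by positivity), inv_mul_cancel₀ hJ0.ne', ENNReal.ofReal_one]

/-- The modular form of the boundedness of `M` on `L^{p(·)}`, for bounded nonnegative `h` with bounded
support: if `h` has modular at most `1`, then so has `M h / η` for some `0 < η < C₁`. -/
def GoodMax {n : ℕ} (p : Vn n → ℝ) (C₁ : ℝ) : Prop :=
  ∀ h : Vn n → ℝ, Measurable h → (∀ x, 0 ≤ h x) → (∃ b, ∀ x, h x ≤ b) →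
    (∃ R, ∀ x, x ∉ ball 0 R → h x = 0) → ∫⁻ x, ENNReal.ofReal (h x ^ p x) ≤ 1 →
    ∃ η : ℝ, 0 < η ∧ η < C₁ ∧ ∫⁻ x, ENNReal.ofReal ((maxOp univ h x / η) ^ p x) ≤ 1

theorem IsBExp.goodMax {n : ℕ} {p : Vn n → ℝ} (hp : IsBExp p) :
    ∃ pm pp C₁ : ℝ, 1 < pm ∧ (∀ᵐ x, pm ≤ p x ∧ p x ≤ pp) ∧ 0 < C₁ ∧ GoodMax p C₁ := by
  obtain ⟨⟨hpm, h1, hess, pp, hpp⟩, C, hC, hbd⟩ := hp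
  rw [Measure.restrict_univ] at hess hpp
  rw [Filter.eventually_map] at hpp
  have hlow : ∀ᵐ x, essInf p volume ≤ p x :=
    ae_essInf_le ⟨1, Filter.eventually_map.2 (Eventually.of_forall fun x => h1 x (mem_univ x))⟩
  refine ⟨essInf p volume, pp, C + 1, hess, hlow.and hpp, by linarith, ?_⟩
  rintro h hm h0 ⟨b, hb⟩ ⟨R, hR⟩ hmod
  have hmod' : ∫⁻ x in univ, ENNReal.ofReal ((|h x| / 1) ^ p x) ≤ 1 := by
    simpa [abs_of_nonneg (h0 _)] using hmod
  have h2 := hbd h ⟨hm, 1, one_pos, hmod'⟩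
  have h3 : luxNorm univ p h ≤ 1 := csInf_le ⟨0, fun _ hη => hη.1.le⟩ ⟨one_pos, hmod'⟩
  obtain ⟨η₀, hη₀⟩ := maxOp_memLux p hess hlow h hm h0 b hb R hR
  have h4 : luxNorm univ p (maxOp univ h) < C + 1 := by nlinarith
  obtain ⟨η, ⟨hη0, hη⟩, hlt⟩ := exists_lt_of_csInf_lt ⟨η₀, by simpa using hη₀⟩ h4
  exact ⟨η, hη0, hlt, by simpa [abs_of_nonneg (maxOp_nonneg h _)] using hη⟩

/-! ### Modulars and norms of characteristic functions -/

/-- The hypothesis `1 < p` almost everywhere excludes the value `conjExp p x = 0`, for which the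
convention `0 ^ 0 = 1` would give a contribution off `A`. -/
theorem modular_chiS {n : ℕ} (p : Vn n → ℝ) (hp : ∀ᵐ x, 1 < p x) {A : Set (Vn n)}
    (hA : MeasurableSet A) (η : ℝ) :
    ∫⁻ x in univ, ENNReal.ofReal ((|chiS A x| / η) ^ conjExp p x) =
      ∫⁻ x in A, ENNReal.ofReal (η⁻¹ ^ conjExp p x) := by
  rw [Measure.restrict_univ, ← lintegral_indicator hA]
  refine lintegral_congr_ae ?_
  filter_upwards [hp] with x hx
  by_cases hxA : x ∈ A
  · simp [chiS, hxA]
  · have : conjExp p x ≠ 0 := (div_pos (by linarith) (by linarith)).ne'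
    simp [chiS, hxA, Real.zero_rpow this]

theorem modular_lt_top {n : ℕ} (p : Vn n → ℝ) {pm pp : ℝ} (hpm : 1 < pm)
    (hpp : ∀ᵐ x, pm ≤ p x ∧ p x ≤ pp) {A : Set (Vn n)} (hA : volume A ≠ ∞) {η : ℝ} (hη : 0 < η) :
    ∫⁻ x in A, ENNReal.ofReal (η⁻¹ ^ conjExp p x) ≠ ∞ := by
  refine ((lintegral_mono_ae (g := fun _ => ENNReal.ofReal (max 1 η⁻¹ ^ (pp / (pm - 1))))
    ?_).trans_lt ?_).ne
  · filter_upwards [ae_restrict_of_ae hpp] with x hx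
    refine ENNReal.ofReal_le_ofReal ?_
    have hc : conjExp p x ≤ pp / (pm - 1) := by
      unfold conjExp; gcongr <;> linarith
    have hc0 : 0 ≤ conjExp p x := div_nonneg (by linarith) (by linarith)
    calc η⁻¹ ^ conjExp p x ≤ max 1 η⁻¹ ^ conjExp p x :=
          Real.rpow_le_rpow (by positivity) (le_max_right _ _) hc0
      _ ≤ _ := Real.rpow_le_rpow_of_exponent_le (le_max_left _ _) hc
  · rw [setLIntegral_const]
    exact ENNReal.mul_lt_top ENNReal.ofReal_lt_top hA.lt_top

/-- The set of admissible `η` in the norm of `χ_A` is nonempty, so that its infimum is meaningful. -/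
theorem exists_modular_le {n : ℕ} (p : Vn n → ℝ) (hp : ∀ᵐ x, 1 < p x) {A : Set (Vn n)}
    (hA : volume A ≠ ∞) :
    ∃ η : ℝ, 0 < η ∧ ∫⁻ x in A, ENNReal.ofReal (η⁻¹ ^ conjExp p x) ≤ 1 := by
  set η := max 1 (volume A).toReal with hη
  have h1 : 1 ≤ η := le_max_left _ _
  refine ⟨η, by linarith, ?_⟩
  calc ∫⁻ x in A, ENNReal.ofReal (η⁻¹ ^ conjExp p x) ≤ ∫⁻ x in A, ENNReal.ofReal η⁻¹ := by
        refine lintegral_mono_ae ?_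
        filter_upwards [ae_restrict_of_ae hp] with x hx
        refine ENNReal.ofReal_le_ofReal (Real.rpow_le_self_of_le_one (by positivity)
          (inv_le_one_of_one_le₀ h1) ?_)
        rw [conjExp, one_le_div (by linarith)]; linarith
    _ = ENNReal.ofReal η⁻¹ * volume A := setLIntegral_const _ _
    _ ≤ ENNReal.ofReal η⁻¹ * ENNReal.ofReal η := by
        gcongr
        rw [← ENNReal.ofReal_toReal hA]
        exact ENNReal.ofReal_le_ofReal (le_max_right _ _)
    _ = 1 := by
        rw [← ENNReal.ofReal_mul (by positivity), inv_mul_cancel₀ (by positivity), ENNReal.ofReal_one]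

theorem luxNorm_chiS_mono {n : ℕ} (p : Vn n → ℝ) (hp : ∀ᵐ x, 1 < p x) {A E : Set (Vn n)}
    (hA : MeasurableSet A) (hE : MeasurableSet E) (hAE : A ⊆ E) (hEf : volume E ≠ ∞) :
    luxNorm univ (conjExp p) (chiS A) ≤ luxNorm univ (conjExp p) (chiS E) := by
  refine csInf_le_csInf ⟨0, fun _ hη => hη.1.le⟩ ?_ ?_
  · obtain ⟨η, hη, h⟩ := exists_modular_le p hp hEf
    exact ⟨η, hη, by rwa [modular_chiS p hp hE]⟩
  · rintro η ⟨hη, h⟩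
    rw [modular_chiS p hp hE] at h
    refine ⟨hη, ?_⟩
    rw [modular_chiS p hp hA]
    exact (lintegral_mono_set hAE).trans h

theorem luxNorm_nonneg {n : ℕ} (E : Set (Vn n)) (p f : Vn n → ℝ) : 0 ≤ luxNorm E p f :=
  Real.sInf_nonneg fun _ hη => hη.1.le

/-- The duality step: comparing integrals of `h` over `A` with integrals of `M h` over `E` gives a
comparison of the `L^{p'(·)}` norms of `χ_A` and `χ_E`. -/
theorem transfer {n : ℕ} (p : Vn n → ℝ) (hpme : Measurable p) {pm pp C₁ : ℝ} (hpm : 1 < pm)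
    (hpp : ∀ᵐ x, pm ≤ p x ∧ p x ≤ pp) (hC₁ : 0 < C₁) (hgood : GoodMax p C₁)
    {A E : Set (Vn n)} (hA : MeasurableSet A) (hE : MeasurableSet E) {R : ℝ}
    (hAR : A ⊆ ball 0 R) (hEf : volume E ≠ ∞) {l : ℝ} (hl : 0 < l)
    (hAE : ∀ h : Vn n → ℝ, Measurable h → (∀ x, 0 ≤ h x) → (∃ b, ∀ x, h x ≤ b) →
      ∫⁻ x in A, ENNReal.ofReal (h x) ≤
        ENNReal.ofReal l * ∫⁻ x in E, ENNReal.ofReal (maxOp univ h x)) :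
    luxNorm univ (conjExp p) (chiS A) ≤ 3 * C₁ * l * luxNorm univ (conjExp p) (chiS E) := by
  have hp1 : ∀ᵐ x, 1 < p x := hpp.mono fun x hx => by linarith
  have hqm : Measurable (conjExp p) := by unfold conjExp; fun_prop
  rw [← div_le_iff₀' (by positivity)]
  refine le_csInf ?_ ?_
  · obtain ⟨η, hη, h⟩ := exists_modular_le p hp1 hEf
    exact ⟨η, hη, by rwa [modular_chiS p hp1 hE]⟩
  rintro η ⟨hη, hmod⟩
  rw [modular_chiS p hp1 hE] at hmod
  rw [div_le_iff₀' (by positivity)]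
  set t := 3 * C₁ * l * η with ht
  have ht0 : 0 < t := by positivity
  refine csInf_le ⟨0, fun _ hη => hη.1.le⟩ ⟨ht0, ?_⟩
  rw [modular_chiS p hp1 hA]
  by_contra! hcon
  have hAf : volume A ≠ ∞ := ((measure_mono hAR).trans_lt measure_ball_lt_top).ne
  have htop := modular_lt_top p hpm hpp hAf ht0
  set ρ := (∫⁻ x in A, ENNReal.ofReal (t⁻¹ ^ conjExp p x)).toReal with hρ
  have hρ' : ∫⁻ x in A, ENNReal.ofReal (t⁻¹ ^ conjExp p x) = ENNReal.ofReal ρ :=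
    (ENNReal.ofReal_toReal htop).symm
  have hρ1 : 1 < ρ := by
    rw [hρ', ← ENNReal.ofReal_one, ENNReal.ofReal_lt_ofReal_iff_of_nonneg zero_le_one] at hcon
    exact hcon
  have hρ0 : 0 < ρ := by linarith
  set G : Set (Vn n) := {x | pm ≤ p x} with hG
  have hGm : MeasurableSet G := measurableSet_le measurable_const hpme
  -- the near-extremal test function; `(conjExp p - 1) * p = conjExp p` makes its modular equal to `1`.
  -- Restricting to `G`, which has full measure, keeps it bounded everywhere.
  set h : Vn n → ℝ := (A ∩ G).indicator fun x => t⁻¹ ^ (conjExp p x - 1) * ρ ^ (-(p x)⁻¹) with hh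
  have hm : Measurable h := by
    refine Measurable.indicator ?_ (hA.inter hGm)
    fun_prop
  have h0 : ∀ x, 0 ≤ h x := fun x => indicator_nonneg (fun x _ => by positivity) x
  have hb : ∀ x, h x ≤ max 1 t⁻¹ ^ (1 / (pm - 1)) := by
    intro x
    by_cases hx : x ∈ A ∩ G
    swap
    · rw [hh, indicator_of_notMem hx]
      positivity
    rw [hh, indicator_of_mem hx]
    have hpx : pm ≤ p x := hx.2
    have hq : conjExp p x - 1 = 1 / (p x - 1) := by
      have : p x - 1 ≠ 0 := by linarith
      unfold conjExp; field_simp; ring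
    have hc : conjExp p x - 1 ≤ 1 / (pm - 1) := by
      rw [hq]; gcongr
    have hc0 : 0 ≤ conjExp p x - 1 := by
      rw [hq]; exact div_nonneg zero_le_one (by linarith)
    calc _ ≤ max 1 t⁻¹ ^ (1 / (pm - 1)) * 1 := by
          gcongr
          · exact (Real.rpow_le_rpow (by positivity) (le_max_right _ _) hc0).trans
              (Real.rpow_le_rpow_of_exponent_le (le_max_left _ _) hc)
          · refine Real.rpow_le_one_of_one_le_of_nonpos hρ1.le ?_
            have : 0 ≤ (p x)⁻¹ := inv_nonneg.2 (by linarith)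
            linarith
      _ = _ := mul_one _
  have hsupp : ∀ x, x ∉ ball 0 R → h x = 0 := fun x hx =>
    indicator_of_notMem (fun hx' => hx (hAR hx'.1)) _
  have hGae : ∀ᵐ x, x ∈ G := hpp.mono fun x hx => hx.1
  have hmodh : ∫⁻ x, ENNReal.ofReal (h x ^ p x) ≤ 1 := by
    calc ∫⁻ x, ENNReal.ofReal (h x ^ p x)
        = ∫⁻ x, A.indicator (fun x => ENNReal.ofReal ρ⁻¹ *
            ENNReal.ofReal (t⁻¹ ^ conjExp p x)) x := by
          refine lintegral_congr_ae ?_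
          filter_upwards [hGae] with x hx
          have hpx : pm ≤ p x := hx
          by_cases hxA : x ∈ A
          · have hmem : x ∈ A ∩ G := ⟨hxA, hx⟩
            have e1 : (conjExp p x - 1) * p x = conjExp p x := by
              have : p x - 1 ≠ 0 := by linarith
              unfold conjExp; field_simp; ring
            have e2 : -(p x)⁻¹ * p x = -1 := by
              have : p x ≠ 0 := by linarith
              field_simp
            rw [hh, indicator_of_mem hmem, indicator_of_mem hxA,
              Real.mul_rpow (by positivity) (by positivity), ← Real.rpow_mul (by positivity),
              ← Real.rpow_mul (by positivity), e1, e2, Real.rpow_neg_one, mul_comm,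
              ENNReal.ofReal_mul (by positivity)]
          · rw [hh, indicator_of_notMem (fun h => hxA h.1), indicator_of_notMem hxA,
              Real.zero_rpow (by linarith), ENNReal.ofReal_zero]
      _ = ENNReal.ofReal ρ⁻¹ * ENNReal.ofReal ρ := by
          rw [lintegral_indicator hA, lintegral_const_mul' _ _ ENNReal.ofReal_ne_top, hρ']
      _ ≤ 1 := by
          rw [← ENNReal.ofReal_mul (by positivity), inv_mul_cancel₀ hρ0.ne', ENNReal.ofReal_one]
  have hlow : ENNReal.ofReal t ≤ ∫⁻ x in A, ENNReal.ofReal (h x) := by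
    calc ENNReal.ofReal t = ENNReal.ofReal (t * ρ⁻¹) * ENNReal.ofReal ρ := by
          rw [← ENNReal.ofReal_mul (by positivity), mul_assoc, inv_mul_cancel₀ hρ0.ne', mul_one]
      _ = ∫⁻ x in A, ENNReal.ofReal (t * ρ⁻¹) * ENNReal.ofReal (t⁻¹ ^ conjExp p x) := by
          rw [lintegral_const_mul' _ _ ENNReal.ofReal_ne_top, hρ']
      _ ≤ _ := by
          refine lintegral_mono_ae ?_
          filter_upwards [ae_restrict_of_ae hGae, ae_restrict_mem hA] with x hx hxA
          have hpx : pm ≤ p x := hx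
          have hmem : x ∈ A ∩ G := ⟨hxA, hx⟩
          rw [← ENNReal.ofReal_mul (by positivity), hh, indicator_of_mem hmem]
          refine ENNReal.ofReal_le_ofReal ?_
          have e1 : t⁻¹ ^ (conjExp p x - 1) = t * t⁻¹ ^ conjExp p x := by
            rw [Real.rpow_sub_one (by positivity), div_inv_eq_mul, mul_comm]
          have e2 : ρ⁻¹ ≤ ρ ^ (-(p x)⁻¹) := by
            rw [← Real.rpow_neg_one]
            refine Real.rpow_le_rpow_of_exponent_le hρ1.le ?_
            have : (p x)⁻¹ ≤ 1 := inv_le_one_of_one_le₀ (by linarith)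
            linarith
          rw [e1, mul_right_comm]
          exact mul_le_mul_of_nonneg_left e2 (by positivity)
  obtain ⟨η₁, hη₁, hη₁C, hM⟩ := hgood h hm h0 ⟨_, hb⟩ ⟨R, hsupp⟩ hmodh
  have hup : ∫⁻ x in E, ENNReal.ofReal (maxOp univ h x) ≤ ENNReal.ofReal (η * η₁ * 2) := by
    calc ∫⁻ x in E, ENNReal.ofReal (maxOp univ h x)
        ≤ ∫⁻ x in E, ENNReal.ofReal (η * η₁) * (ENNReal.ofReal (η⁻¹ ^ conjExp p x) +
            ENNReal.ofReal ((maxOp univ h x / η₁) ^ p x)) := by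
          refine lintegral_mono_ae ?_
          filter_upwards [ae_restrict_of_ae hp1] with x hx
          have hMn := maxOp_nonneg h x
          have hH : (conjExp p x).HolderConjugate (p x) :=
            (Real.HolderConjugate.conjExponent hx).symm
          have hY := Real.young_inequality_of_nonneg (a := η⁻¹) (b := maxOp univ h x / η₁)
            (by positivity) (by positivity) hH
          have e : maxOp univ h x = η * η₁ * (η⁻¹ * (maxOp univ h x / η₁)) := by field_simp
          rw [← ENNReal.ofReal_add (by positivity) (by positivity),
            ← ENNReal.ofReal_mul (by positivity)]
          refine ENNReal.ofReal_le_ofReal ?_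
          conv_lhs => rw [e]
          gcongr
          refine hY.trans (add_le_add ?_ ?_)
          · exact div_le_self (by positivity) hH.lt.le
          · exact div_le_self (by positivity) hx.le
      _ = ENNReal.ofReal (η * η₁) * ((∫⁻ x in E, ENNReal.ofReal (η⁻¹ ^ conjExp p x)) +
            ∫⁻ x in E, ENNReal.ofReal ((maxOp univ h x / η₁) ^ p x)) := by
          rw [lintegral_const_mul' _ _ ENNReal.ofReal_ne_top, lintegral_add_left (by fun_prop)]
      _ ≤ ENNReal.ofReal (η * η₁) * (1 + 1) := by
          gcongr
          exact (setLIntegral_le_lintegral _ _).trans hM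
      _ = _ := by
          rw [ENNReal.ofReal_mul (p := η * η₁) (by positivity), one_add_one_eq_two,
            ENNReal.ofReal_ofNat]
  have hfin : ENNReal.ofReal t ≤ ENNReal.ofReal (l * (η * η₁ * 2)) := by
    rw [ENNReal.ofReal_mul hl.le]
    exact hlow.trans ((hAE h hm h0 ⟨_, hb⟩).trans (by gcongr))
  rw [ENNReal.ofReal_le_ofReal_iff (by positivity), ht] at hfin
  have : l * η * η₁ < l * η * C₁ := by gcongr
  have : 0 < l * η * C₁ := by positivity
  nlinarith

/-! ### Decay of the norm inside a cube -/

theorem unitCell_eq {n : ℕ} (c : Vn n) (r : ℝ) {x : Vn n} (hx : gridIdx c r 0 x = 0) :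
    {y | gridIdx c r 0 y = 0} = cell c r 0 x := by
  simp only [cell, hx]

theorem unitCell_ball {n : ℕ} (c : Vn n) {r : ℝ} (hr : 0 < r) :
    {y | gridIdx c r 0 y = 0} = cell c r 0 c :=
  unitCell_eq c r (ball_subset_cell c hr (mem_ball_self hr))

theorem unitCell_bounded {n : ℕ} (c : Vn n) {r : ℝ} (hr : 0 < r) :
    ∃ R, {y | gridIdx c r 0 y = 0} ⊆ ball 0 R := by
  obtain ⟨z, -, h⟩ := exists_cell_balls c hr 0 c
  rw [unitCell_ball c hr]
  exact ⟨_, h.trans (ball_subset_ball' le_rfl)⟩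

theorem volume_unitCell_le {n : ℕ} (c : Vn n) {r : ℝ} (hr : 0 < r) :
    volume {y | gridIdx c r 0 y = 0} ≤ ENNReal.ofReal (dbl n) * volume (ball c r) := by
  obtain ⟨z, -, h⟩ := exists_cell_balls c hr 0 c
  rw [unitCell_ball c hr]
  refine (measure_mono h).trans (volume_ball_le z c ?_)
  have := mul_pos (by positivity : (0 : ℝ) < n + 1) hr
  rw [pow_zero, div_one]
  nlinarith

/-- The norm of the characteristic function of the circumscribed cube is controlled by that of the
ball: at every point of the ball, `M h` dominates the average of `h` over the cube. -/
theorem luxNorm_unitCell_le {n : ℕ} (p : Vn n → ℝ) (hpme : Measurable p) {pm pp C₁ : ℝ}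
    (hpm : 1 < pm) (hpp : ∀ᵐ x, pm ≤ p x ∧ p x ≤ pp) (hC₁ : 0 < C₁) (hgood : GoodMax p C₁)
    (c : Vn n) {r : ℝ} (hr : 0 < r) :
    luxNorm univ (conjExp p) (chiS {y | gridIdx c r 0 y = 0}) ≤
      3 * C₁ * (dbl n * dbl n) * luxNorm univ (conjExp p) (chiS (ball c r)) := by
  have hD := two_le_dbl n
  obtain ⟨R, hR⟩ := unitCell_bounded c hr
  refine transfer p hpme hpm hpp hC₁ hgood (gridIdx_measurable c r 0 0) measurableSet_ball hR
    measure_ball_lt_top.ne (by positivity) ?_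
  rintro h hm h0 ⟨b, hb⟩
  set Q := {y | gridIdx c r 0 y = 0} with hQ
  set A := ∫⁻ x in Q, ENNReal.ofReal (h x) with hA
  have hQ0 : volume Q ≠ 0 := by
    rw [hQ, unitCell_ball c hr]; exact volume_cell_ne_zero c hr 0 c
  have hQt : volume Q ≠ ∞ := by
    rw [hQ, unitCell_ball c hr]; exact volume_cell_ne_top c hr 0 c
  calc A = volume Q * (A / volume Q) := (ENNReal.mul_div_cancel hQ0 hQt).symm
    _ ≤ (ENNReal.ofReal (dbl n) * volume (ball c r)) * (A / volume Q) := by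
        gcongr; exact volume_unitCell_le c hr
    _ = ENNReal.ofReal (dbl n) * ∫⁻ x in ball c r, A / volume Q := by
        rw [setLIntegral_const, mul_assoc, mul_comm (A / _)]
    _ ≤ ENNReal.ofReal (dbl n) * ∫⁻ x in ball c r,
          ENNReal.ofReal (dbl n) * ENNReal.ofReal (maxOp univ h x) := by
        gcongr ENNReal.ofReal (dbl n) * ?_
        refine setLIntegral_mono' measurableSet_ball fun x hx => ?_
        refine ENNReal.div_le_of_le_mul' ?_
        rw [hA, hQ, unitCell_eq c r (ball_subset_cell c hr hx)]
        exact lintegral_cell_le h hm h0 b hb c hr 0 x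
    _ = _ := by
        rw [lintegral_const_mul' _ _ ENNReal.ofReal_ne_top, ← mul_assoc,
          ENNReal.ofReal_mul (by positivity)]

/-- A chain of `k` stopping-time steps, with `k` a large constant, at least halves the norm. -/
theorem luxNorm_half {n : ℕ} (p : Vn n → ℝ) (hpme : Measurable p) {pm pp C₁ : ℝ}
    (hpm : 1 < pm) (hpp : ∀ᵐ x, pm ≤ p x ∧ p x ≤ pp) (hC₁ : 0 < C₁) (hgood : GoodMax p C₁)
    {k : ℕ} (hk : 12 * C₁ * dbl n ≤ k) (c : Vn n) {r : ℝ} (hr : 0 < r)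
    (S : Set (Vn n)) (hS : MeasurableSet S) (hSQ : S ⊆ {x | gridIdx c r 0 x = 0})
    (hSo : ∀ x ∈ S, ∃ m, cell c r m x ⊆ S)
    (hSa : volume S ≤ ENNReal.ofReal (2 * dbl n)⁻¹ ^ k * volume {x | gridIdx c r 0 x = 0}) :
    ∃ S' : Set (Vn n), MeasurableSet S' ∧ S' ⊆ {x | gridIdx c r 0 x = 0} ∧
      (∀ x ∈ S', ∃ m, cell c r m x ⊆ S') ∧
      ENNReal.ofReal (2 * dbl n)⁻¹ ^ k * volume S' ≤ volume S ∧
      luxNorm univ (conjExp p) (chiS S) ≤ 1 / 2 * luxNorm univ (conjExp p) (chiS S') := by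
  have hD := two_le_dbl n
  have hD0 : 0 < dbl n := by linarith
  have hk0 : 0 < (k : ℝ) := lt_of_lt_of_le (by positivity) hk
  obtain ⟨S', hS', -, hSQ', hSo', hSa', hSh⟩ := dyadic_chain volume (gridIdx c r)
    (gridIdx_measurable c r) (gridIdx_nest c r) (volume_cell_ne_top c hr)
    (volume_cell_ne_zero c hr) (ENNReal.ofReal (2 * dbl n)⁻¹) (ENNReal.ofReal (dbl n))
    (by rw [Ne, ENNReal.ofReal_eq_zero, not_le]; positivity)
    (by rw [ENNReal.ofReal_lt_one]; exact inv_lt_one_of_one_lt₀ (by linarith))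
    (by
      rw [← ENNReal.ofReal_mul (by positivity), mul_inv, mul_assoc, inv_mul_cancel₀ hD0.ne',
        mul_one, ENNReal.ofReal_inv_of_pos two_pos, ENNReal.ofReal_ofNat])
    (volume_cell_le c hr) 0 k S hS hSQ hSo hSa
  refine ⟨S', hS', hSQ', hSo', hSa', ?_⟩
  obtain ⟨R, hR⟩ := unitCell_bounded c hr
  have hQt : volume {x | gridIdx c r 0 x = 0} ≠ ∞ := by
    rw [unitCell_ball c hr]; exact volume_cell_ne_top c hr 0 c
  refine (transfer p hpme hpm hpp hC₁ hgood hS hS' (hSQ.trans hR)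
    ((measure_mono hSQ').trans_lt hQt.lt_top).ne (l := 2 * dbl n / k) (by positivity) ?_).trans ?_
  · rintro h hm h0 ⟨b, hb⟩
    have := hSh (fun x => ENNReal.ofReal (h x))
      (fun x => ENNReal.ofReal (dbl n) * ENNReal.ofReal (maxOp univ h x))
      (fun m x => lintegral_cell_le h hm h0 b hb c hr m x)
    rw [lintegral_const_mul' _ _ ENNReal.ofReal_ne_top] at this
    rw [ENNReal.ofReal_div_of_pos hk0, ENNReal.ofReal_mul two_pos.le, ENNReal.ofReal_ofNat,
      ENNReal.ofReal_natCast, ENNReal.mul_div_right_comm.symm]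
    rw [ENNReal.le_div_iff_mul_le (Or.inl (by exact_mod_cast hk0.ne')) (Or.inl (by simp)),
      mul_comm, mul_assoc]
    refine this.trans ?_
    gcongr
    exact sdiff_subset
  · refine mul_le_mul_of_nonneg_right ?_ (luxNorm_nonneg _ _ _)
    rw [← mul_div_assoc, div_le_iff₀ hk0]
    linarith

/-- Iterating `luxNorm_half`: `m` blocks of `k` steps give the factor `2 ^ (-m)`. -/
theorem luxNorm_decay {n : ℕ} (p : Vn n → ℝ) (hpme : Measurable p) {pm pp C₁ : ℝ}
    (hpm : 1 < pm) (hpp : ∀ᵐ x, pm ≤ p x ∧ p x ≤ pp) (hC₁ : 0 < C₁) (hgood : GoodMax p C₁)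
    {k : ℕ} (hk : 12 * C₁ * dbl n ≤ k) (c : Vn n) {r : ℝ} (hr : 0 < r) (m : ℕ) :
    ∀ (S : Set (Vn n)), MeasurableSet S → S ⊆ {x | gridIdx c r 0 x = 0} →
    (∀ x ∈ S, ∃ m, cell c r m x ⊆ S) →
    volume S ≤ (ENNReal.ofReal (2 * dbl n)⁻¹ ^ k) ^ m * volume {x | gridIdx c r 0 x = 0} →
      luxNorm univ (conjExp p) (chiS S) ≤
        (1 / 2) ^ m * luxNorm univ (conjExp p) (chiS {x | gridIdx c r 0 x = 0}) := by
  have hD := two_le_dbl n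
  have hQt : volume {x | gridIdx c r 0 x = 0} ≠ ∞ := by
    rw [unitCell_ball c hr]; exact volume_cell_ne_top c hr 0 c
  set α := ENNReal.ofReal (2 * dbl n)⁻¹ ^ k with hα
  have hα0 : α ≠ 0 := pow_ne_zero _ (by rw [Ne, ENNReal.ofReal_eq_zero, not_le]; positivity)
  have hα1 : α ≤ 1 := pow_le_one₀ zero_le
    (by rw [ENNReal.ofReal_le_one]; exact inv_le_one_of_one_le₀ (by linarith))
  have hαt : α ≠ ∞ := (hα1.trans_lt one_lt_top).ne
  induction m with
  | zero =>
    intro S hS hSQ _ _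
    rw [pow_zero, one_mul]
    exact luxNorm_chiS_mono p (hpp.mono fun x hx => by linarith) hS (gridIdx_measurable c r 0 0)
      hSQ hQt
  | succ m ih =>
    intro S hS hSQ hSo hSa
    obtain ⟨S', hS', hSQ', hSo', hSa', hSh⟩ := luxNorm_half p hpme hpm hpp hC₁ hgood hk c hr
      S hS hSQ hSo (hSa.trans (by
        gcongr ?_ * _
        rw [pow_succ]
        exact mul_le_of_le_one_left' (pow_le_one₀ zero_le hα1)))
    have := ih S' hS' hSQ' hSo' (by
      refine (ENNReal.mul_le_mul_iff_right hα0 hαt).1 (hSa'.trans (hSa.trans ?_))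
      rw [pow_succ', mul_assoc])
    refine hSh.trans ?_
    rw [pow_succ', mul_assoc]
    gcongr

/-- Lemma 2.3 (third inequality): for `p(·) ∈ ℬ(ℝⁿ)` there are `C > 0` and
`δ₂ ∈ (0,1)` such that for all balls `B` and measurable `S ⊆ B`,
`‖χ_S‖_{p'}/‖χ_B‖_{p'} ≤ C (|S|/|B|)^{δ₂}`. -/
theorem statement3 {n : ℕ} (p : Vn n → ℝ) (hp : IsBExp p) :
    ∃ C : ℝ, 0 < C ∧ ∃ δ₂ : ℝ, 0 < δ₂ ∧ δ₂ < 1 ∧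
      ∀ (c : Vn n) (r : ℝ), 0 < r → ∀ S ⊆ Metric.ball c r, MeasurableSet S →
        luxNorm Set.univ (conjExp p) (chiS S) /
            luxNorm Set.univ (conjExp p) (chiS (Metric.ball c r)) ≤
          C * ((volume S).toReal / (volume (Metric.ball c r)).toReal) ^ δ₂ := by
  obtain ⟨pm, pp, C₁, hpm, hpp, hC₁, hgood⟩ := hp.goodMax
  have hpme : Measurable p := hp.1.1
  have hp1 : ∀ᵐ x, 1 < p x := hpp.mono fun x hx => by linarith
  have hD := two_le_dbl n
  set D := dbl n with hDdef
  obtain ⟨k, hk⟩ := exists_nat_ge (12 * C₁ * D)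
  have hk0 : k ≠ 0 := by
    rintro rfl
    have : 0 < 12 * C₁ * D := by positivity
    simp only [CharP.cast_eq_zero] at hk
    linarith
  set α : ℝ := (2 * D)⁻¹ ^ k with hα
  have hα0 : 0 < α := by positivity
  have hα4 : α ≤ 4⁻¹ := by
    calc α ≤ (2 * D)⁻¹ :=
          pow_le_of_le_one (by positivity) (inv_le_one_of_one_le₀ (by linarith)) hk0
      _ ≤ 4⁻¹ := by gcongr; linarith
  have hαE : ENNReal.ofReal (2 * D)⁻¹ ^ k = ENNReal.ofReal α :=
    (ENNReal.ofReal_pow (by positivity) k).symm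
  have hlogα : Real.log α < 0 := Real.log_neg hα0 (by linarith)
  set δ : ℝ := Real.log 2⁻¹ / Real.log α with hδ
  have hδ0 : 0 < δ := div_pos_of_neg_of_neg (Real.log_neg (by norm_num) (by norm_num)) hlogα
  have hδ1 : δ < 1 := by
    rw [hδ, div_lt_one_of_neg hlogα]
    exact Real.log_lt_log hα0 (by linarith)
  have hαδ : α ^ δ = 2⁻¹ := by
    rw [Real.rpow_def_of_pos hα0, hδ, mul_div_cancel₀ _ hlogα.ne, Real.exp_log (by norm_num)]
  have h2δ : (2 : ℝ) ^ δ ≤ 2 := by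
    simpa using Real.rpow_le_rpow_of_exponent_le one_le_two hδ1.le
  -- `α ^ δ = 1 / 2` turns `m` halvings into the `δ`-th power of the measure ratio
  refine ⟨4 * (3 * C₁ * (D * D)), by positivity, δ, hδ0, hδ1, ?_⟩
  intro c r hr S hSB hS
  have hBt : volume (ball c r) ≠ ∞ := measure_ball_lt_top.ne
  have hB0 : 0 < (volume (ball c r)).toReal :=
    ENNReal.toReal_pos (measure_ball_pos _ c hr).ne' hBt
  have hSt : volume S ≠ ∞ := ((measure_mono hSB).trans_lt hBt.lt_top).ne
  set θ := (volume S).toReal / (volume (ball c r)).toReal with hθ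
  have hθ0 : 0 ≤ θ := by positivity
  refine div_le_of_le_mul₀ (luxNorm_nonneg _ _ _) (by positivity) ?_
  rcases eq_or_ne (volume S) 0 with hS0 | hS0
  · have h0 : luxNorm univ (conjExp p) (chiS S) ≤ 0 := by
      refine le_of_forall_pos_le_add fun ε hε => ?_
      rw [zero_add]
      refine csInf_le ⟨0, fun _ hη => hη.1.le⟩ ⟨hε, ?_⟩
      rw [modular_chiS p hp1 hS, setLIntegral_measure_zero _ _ hS0]
      exact zero_le
    exact h0.trans (mul_nonneg (by positivity) (luxNorm_nonneg _ _ _))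
  have hSpos : 0 < (volume S).toReal := ENNReal.toReal_pos hS0 hSt
  have hθpos : 0 < θ := by positivity
  set Q := {x | gridIdx c r 0 x = 0} with hQ
  have hBQ : ball c r ⊆ Q := ball_subset_cell c hr
  have hQm : MeasurableSet Q := gridIdx_measurable c r 0 0
  have hQt : volume Q ≠ ∞ := by
    rw [hQ, unitCell_ball c hr]; exact volume_cell_ne_top c hr 0 c
  have hQB := luxNorm_unitCell_le p hpme hpm hpp hC₁ hgood c hr
  -- the chain of stopping sets needs a union of cells, so `S` is enlarged to an open set
  obtain ⟨U, hSU, hU, hUS⟩ := Set.exists_isOpen_lt_of_lt S (2 * volume S)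
    (by rw [two_mul]; exact ENNReal.lt_add_right hSt hS0)
  have hVo : ∀ x ∈ U ∩ Q, ∃ m, cell c r m x ⊆ U ∩ Q := by
    rintro x ⟨hxU, hxQ⟩
    obtain ⟨m, hm⟩ := exists_cell_subset c hr hU hxU
    refine ⟨m, subset_inter hm ?_⟩
    rw [hQ, unitCell_eq c r hxQ]
    have : ∀ m, cell c r m x ⊆ cell c r 0 x := by
      intro m
      induction m with
      | zero => exact subset_rfl
      | succ m ih => exact fun y hy => ih (gridIdx_nest c r m y x hy)
    exact this m
  have hSV : luxNorm univ (conjExp p) (chiS S) ≤ luxNorm univ (conjExp p) (chiS (U ∩ Q)) :=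
    luxNorm_chiS_mono p hp1 hS (hU.measurableSet.inter hQm)
      (subset_inter hSU (hSB.trans hBQ)) ((measure_mono inter_subset_right).trans_lt hQt.lt_top).ne
  have hdecay : ∀ m : ℕ, 2 * θ ≤ α ^ m ∨ m = 0 → luxNorm univ (conjExp p) (chiS S) ≤
      (1 / 2) ^ m * luxNorm univ (conjExp p) (chiS Q) := by
    intro m hm
    refine hSV.trans (luxNorm_decay p hpme hpm hpp hC₁ hgood hk c hr m _
      (hU.measurableSet.inter hQm) inter_subset_right hVo ?_)
    rcases hm with hm | rfl
    · rw [← hDdef, hαE, ← ENNReal.ofReal_pow hα0.le]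
      calc volume (U ∩ Q) ≤ 2 * volume S := (measure_mono inter_subset_left).trans hUS.le
        _ = ENNReal.ofReal (2 * θ) * volume (ball c r) := by
          rw [← ENNReal.ofReal_toReal hBt, ← ENNReal.ofReal_mul (by positivity), hθ, mul_assoc,
            div_mul_cancel₀ _ hB0.ne', ENNReal.ofReal_mul two_pos.le, ENNReal.ofReal_toReal hSt,
            ENNReal.ofReal_ofNat]
        _ ≤ _ := by gcongr
    · rw [pow_zero, one_mul]
      exact measure_mono inter_subset_right
  have hmain : ∃ m : ℕ, (2 * θ ≤ α ^ m ∨ m = 0) ∧ (1 / 2 : ℝ) ^ m ≤ 4 * θ ^ δ := by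
    have h2θ : (2 * θ) ^ δ ≤ 2 * θ ^ δ := by
      rw [Real.mul_rpow two_pos.le hθ0]; gcongr
    rcases le_total (2 * θ) 1 with h1 | h1
    · obtain ⟨m, hm1, hm2⟩ := exists_nat_pow_near_of_lt_one (by positivity : 0 < 2 * θ) h1 hα0
        (by linarith : α < 1)
      refine ⟨m, Or.inl hm2, ?_⟩
      have h3 : (α ^ (m + 1)) ^ δ ≤ (2 * θ) ^ δ := Real.rpow_le_rpow (by positivity) hm1.le hδ0.le
      rw [← Real.rpow_natCast, ← Real.rpow_mul hα0.le, mul_comm, Real.rpow_mul hα0.le, hαδ,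
        Real.rpow_natCast, pow_succ] at h3
      rw [one_div]
      linarith
    · refine ⟨0, Or.inr rfl, ?_⟩
      have := Real.one_le_rpow h1 hδ0.le
      rw [pow_zero]
      linarith
  obtain ⟨m, hm, hm'⟩ := hmain
  calc luxNorm univ (conjExp p) (chiS S) ≤ (1 / 2) ^ m * luxNorm univ (conjExp p) (chiS Q) :=
        hdecay m hm
    _ ≤ (4 * θ ^ δ) * (3 * C₁ * (D * D) * luxNorm univ (conjExp p) (chiS (ball c r))) :=
        mul_le_mul hm' hQB (luxNorm_nonneg _ _ _) (by positivity)
    _ = _ := by ring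


end
end
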